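/- arXiv:0709.1084 — 5 statements merged into one kernel-verified Lean document; each statement's English description precedes it below -/
import Mathlib

section
/- Let θ be a real number and for t ≥ 0 set L_θ(t) = inf over integers k ≥ 1 of √(k² + 4 t² sin²(kθ/2)). Then the function t ↦ L_θ(t) is bounded above on [0,∞) if and only if θ/(2π) is a rational number. (Equivalently: the injectivity radius of the flat plane bundle over the circle obtained as the quotient of ℝ³ by the screw motion of angle θ and translation length 1 is bounded if and only if θ is a rational multiple of 2π.) -/
/-- Twice the injectivity radius at distance `t` from the soul of the flat plane bundle
over the circle obtained by quotienting `ℝ³` by the screw motion of angle `θ` and unit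
translation length: the infimum over integers `k ≥ 1` of `√(k² + 4 t² sin²(kθ/2))`. -/
noncomputable def L (θ t : ℝ) : ℝ :=
  ⨅ k : ℕ+, Real.sqrt ((k : ℝ) ^ 2 + 4 * t ^ 2 * Real.sin ((k : ℝ) * θ / 2) ^ 2)

theorem stmt_2 (θ : ℝ) :
    (∃ C : ℝ, ∀ t : ℝ, 0 ≤ t → L θ t ≤ C) ↔ ∃ q : ℚ, θ / (2 * Real.pi) = (q : ℝ) := by
  have hpi := Real.pi_pos
  constructor
  · rintro ⟨C, hC⟩
    by_contra hq
    have hs : ∀ k : ℕ, 0 < k → Real.sin ((k : ℝ) * θ / 2) ≠ 0 := by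
      intro k hk h0
      obtain ⟨n, hn⟩ := Real.sin_eq_zero_iff.mp h0
      apply hq
      refine ⟨(n : ℚ) / (k : ℚ), ?_⟩
      have hk' : (k : ℝ) ≠ 0 := by positivity
      push_cast
      rw [div_eq_div_iff (by positivity) hk']
      linarith
    obtain ⟨N, hN⟩ := exists_nat_gt (C + 1)
    have hev : ∀ᶠ t : ℝ in Filter.atTop, ∀ k ∈ Finset.range N, 0 < k →
        (C + 1) ^ 2 ≤ 4 * t ^ 2 * Real.sin ((k : ℝ) * θ / 2) ^ 2 := by
      rw [Filter.eventually_all_finset]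
      intro k _
      by_cases hk : 0 < k
      · have hp : 0 < 4 * Real.sin ((k : ℝ) * θ / 2) ^ 2 := by
          have := hs k hk
          positivity
        have ht : Filter.Tendsto
            (fun t : ℝ => t ^ 2 * (4 * Real.sin ((k : ℝ) * θ / 2) ^ 2))
            Filter.atTop Filter.atTop :=
          (Filter.tendsto_pow_atTop (by norm_num)).atTop_mul_const hp
        filter_upwards [ht.eventually_ge_atTop ((C + 1) ^ 2)] with t h _
        linarith
      · exact Filter.Eventually.of_forall fun t h => absurd h hk
    obtain ⟨t, ht, ht0⟩ := (hev.and (Filter.eventually_ge_atTop 0)).exists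
    have hle : C + 1 ≤ L θ t := by
      unfold L
      apply le_ciInf
      intro k
      apply Real.le_sqrt_of_sq_le
      have hk1 : (0 : ℝ) < ((k : ℕ) : ℝ) := by exact_mod_cast k.pos
      by_cases hk : (k : ℕ) < N
      · have := ht k (Finset.mem_range.mpr hk) k.pos
        have h2 := sq_nonneg ((k : ℕ) : ℝ)
        linarith
      · have hkN : (N : ℝ) ≤ ((k : ℕ) : ℝ) := by exact_mod_cast not_lt.mp hk
        have hC0 : 0 ≤ C := by
          refine le_trans ?_ (hC t ht0)
          exact Real.iInf_nonneg fun _ => Real.sqrt_nonneg _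
        have h3 : 0 ≤ 4 * t ^ 2 * Real.sin (((k : ℕ) : ℝ) * θ / 2) ^ 2 := by positivity
        have h4 : (C + 1) ^ 2 ≤ ((k : ℕ) : ℝ) ^ 2 := by
          apply pow_le_pow_left₀ <;> linarith
        linarith
    linarith [hC t ht0]
  · rintro ⟨q, hq⟩
    refine ⟨q.den, fun t _ => ?_⟩
    have hd : (q.den : ℝ) ≠ 0 := by exact_mod_cast q.den_nz
    have hsin : Real.sin ((q.den : ℝ) * θ / 2) = 0 := by
      rw [Real.sin_eq_zero_iff]
      refine ⟨q.num, ?_⟩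
      rw [Rat.cast_def, div_eq_div_iff (by positivity) hd] at hq
      linarith
    have hb : BddBelow (Set.range fun k : ℕ+ =>
        Real.sqrt ((k : ℝ) ^ 2 + 4 * t ^ 2 * Real.sin ((k : ℝ) * θ / 2) ^ 2)) :=
      ⟨0, by rintro _ ⟨k, rfl⟩; exact Real.sqrt_nonneg _⟩
    refine (ciInf_le hb ⟨q.den, q.den_pos⟩).trans ?_
    simp [hsin]
end

section
/- Let p be an integer and q a positive integer with p and q coprime, and let θ = 2πp/q. Then there exists T > 0 such that for every t ≥ T, the infimum over integers k ≥ 1 of √(k² + 4 t² sin²(kθ/2)) equals q. (Equivalently: outside a compact set, the injectivity radius of the flat plane bundle over the circle with holonomy angle 2πp/q is constant, equal to q/2.) -/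
theorem stmt_3 (p : ℤ) (q : ℕ) (hq : 0 < q) (hpq : Nat.Coprime p.natAbs q) :
    ∃ T : ℝ, 0 < T ∧ ∀ t : ℝ, T ≤ t → L (2 * Real.pi * p / q) t = q := by
  have hqR : (0 : ℝ) < q := by exact_mod_cast hq
  have hqne : (q : ℝ) ≠ 0 := hqR.ne'
  set θ : ℝ := 2 * Real.pi * p / q with hθ
  have hne : ∀ k : ℕ, 0 < k → k < q → Real.sin ((k : ℝ) * θ / 2) ≠ 0 := by
    intro k hk hkq h0
    obtain ⟨n, hn⟩ := Real.sin_eq_zero_iff.mp h0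
    have h1 : (n : ℝ) * q = k * p := by
      have h2 : ((n : ℝ) * q) * Real.pi = (k * p) * Real.pi := by
        have : (n : ℝ) * q * Real.pi = (n * Real.pi) * q := by ring
        rw [this, hn, hθ]
        field_simp
      exact mul_right_cancel₀ Real.pi_ne_zero h2
    have h3 : n * (q : ℤ) = k * p := by exact_mod_cast h1
    have h4 : (q : ℤ) ∣ k * p := ⟨n, by rw [← h3]; ring⟩
    have h5 : q ∣ k * p.natAbs := by
      have := Int.natAbs_dvd_natAbs.mpr h4
      simpa [Int.natAbs_mul] using this
    have h6 : q ∣ k := hpq.symm.dvd_of_dvd_mul_right h5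
    exact absurd (Nat.le_of_dvd hk h6) (by omega)
  have hnn : ∀ k ∈ Finset.range q, 0 ≤ (q : ℝ) / |Real.sin ((k : ℝ) * θ / 2)| := by
    intro k _
    positivity
  refine ⟨1 + ∑ k ∈ Finset.range q, (q : ℝ) / |Real.sin ((k : ℝ) * θ / 2)|, ?_, ?_⟩
  · have := Finset.sum_nonneg hnn
    linarith
  · intro t ht
    unfold L
    apply le_antisymm
    · have hb : BddBelow (Set.range fun k : ℕ+ =>
          Real.sqrt (((k : ℕ) : ℝ) ^ 2 + 4 * t ^ 2 * Real.sin (((k : ℕ) : ℝ) * θ / 2) ^ 2)) := by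
        refine ⟨0, ?_⟩
        rintro _ ⟨k, rfl⟩
        exact Real.sqrt_nonneg _
      refine (ciInf_le hb ⟨q, hq⟩).trans ?_
      have h0 : Real.sin ((q : ℝ) * θ / 2) = 0 := by
        have : (q : ℝ) * θ / 2 = p * Real.pi := by
          rw [hθ]
          field_simp
        rw [this]
        exact Real.sin_int_mul_pi p
      simp [h0]
    · apply le_ciInf
      intro k
      apply Real.le_sqrt_of_sq_le
      by_cases hk : q ≤ (k : ℕ)
      · have h1 : (q : ℝ) ≤ ((k : ℕ) : ℝ) := by exact_mod_cast hk
        have h2 : 0 ≤ 4 * t ^ 2 * Real.sin (((k : ℕ) : ℝ) * θ / 2) ^ 2 := by positivity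
        nlinarith
      · have hk' : (k : ℕ) < q := by omega
        have h1 := Finset.single_le_sum hnn (Finset.mem_range.mpr hk')
        have h2 : 0 < |Real.sin (((k : ℕ) : ℝ) * θ / 2)| := abs_pos.mpr (hne k k.pos hk')
        have h3 : (q : ℝ) / |Real.sin (((k : ℕ) : ℝ) * θ / 2)| ≤ t := by linarith
        rw [div_le_iff₀ h2] at h3
        have h4 : (q : ℝ) ^ 2 ≤ (t * |Real.sin (((k : ℕ) : ℝ) * θ / 2)|) ^ 2 :=
          pow_le_pow_left₀ hqR.le h3 2
        rw [mul_pow, sq_abs] at h4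
        have h5 : 0 ≤ t ^ 2 * Real.sin (((k : ℕ) : ℝ) * θ / 2) ^ 2 := by positivity
        nlinarith [sq_nonneg ((k : ℕ) : ℝ)]
end

section
/- Let ξ be a real number that is irrational and algebraic over ℚ, let θ = 2πξ, and let α ∈ (0, 1/2). Then there exist positive constants T and C, depending only on ξ and α, such that for every t > T, the infimum over integers k ≥ 1 of √(k² + 4 t² sin²(kθ/2)) is at least 2 C t^α. (Equivalently: the injectivity radius of the corresponding flat plane bundle at distance t from the soul is at least C t^α.) -/
set_option linter.unusedSectionVars false
set_option linter.unusedSimpArgs false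
set_option linter.unusedVariables false

namespace RothThm
open MvPolynomial

section Hasse
variable {σ : Type*} [Fintype σ] {R : Type*} [CommRing R]

/-- Product of binomial coefficients. -/
def mchoose (s μ : σ →₀ ℕ) : ℕ := ∏ h, (s h).choose (μ h)

lemma mchoose_eq_zero {s μ : σ →₀ ℕ} (h : ¬ μ ≤ s) : mchoose s μ = 0 := by
  rw [Finsupp.le_def] at h
  push Not at h
  obtain ⟨i, hi⟩ := h
  exact Finset.prod_eq_zero (Finset.mem_univ i) (Nat.choose_eq_zero_of_lt hi)

lemma mchoose_zero (s : σ →₀ ℕ) : mchoose s 0 = 1 := by simp [mchoose]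

lemma mchoose_self (s : σ →₀ ℕ) : mchoose s s = 1 := by simp [mchoose]

lemma mchoose_pos {s μ : σ →₀ ℕ} (h : μ ≤ s) : 0 < mchoose s μ :=
  Finset.prod_pos fun i _ => Nat.choose_pos (h i)

lemma mchoose_le (s μ : σ →₀ ℕ) : mchoose s μ ≤ 2 ^ (∑ h, s h) := by
  rw [← Finset.prod_pow_eq_pow_sum]
  exact Finset.prod_le_prod' fun i _ => Nat.choose_le_two_pow _ _

/-- The multivariate Hasse derivative. -/
noncomputable def hasse (μ : σ →₀ ℕ) : MvPolynomial σ R →ₗ[R] MvPolynomial σ R :=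
  (basisMonomials σ R).constr R (fun s => monomial (s - μ) (mchoose s μ : R))

lemma hasse_monomial (μ s : σ →₀ ℕ) (c : R) :
    hasse μ (monomial s c) = monomial (s - μ) (c * mchoose s μ) := by
  have h1 : hasse μ (monomial s (1 : R)) = monomial (s - μ) (mchoose s μ : R) := by
    have := (basisMonomials σ R).constr_basis R (fun s => monomial (s - μ) (mchoose s μ : R)) s
    rwa [coe_basisMonomials] at this
  have h2 : monomial s c = c • monomial s (1 : R) := by simp [smul_monomial]
  rw [h2, map_smul, h1, smul_monomial, smul_eq_mul]

lemma coeff_hasse (μ t : σ →₀ ℕ) (P : MvPolynomial σ R) :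
    coeff t (hasse μ P) = coeff (t + μ) P * mchoose (t + μ) μ := by
  classical
  induction P using MvPolynomial.induction_on' with
  | monomial s c =>
    rw [hasse_monomial, coeff_monomial, coeff_monomial]
    by_cases hs : s = t + μ
    · subst hs; simp
    · rw [if_neg hs]
      split_ifs with h
      · rw [mchoose_eq_zero]
        · simp
        · intro hle; apply hs; rw [← h, tsub_add_cancel_of_le hle]
      · simp
  | add p q hp hq => rw [map_add, coeff_add, coeff_add, hp, hq, add_mul]

lemma hasse_zero (P : MvPolynomial σ R) : hasse 0 P = P := by
  ext t; simp [coeff_hasse, mchoose_zero]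

lemma hasse_map {S : Type*} [CommRing S] (f : R →+* S) (μ : σ →₀ ℕ) (P : MvPolynomial σ R) :
    hasse μ (map f P) = map f (hasse μ P) := by
  ext t; simp [coeff_hasse, coeff_map]

lemma mchoose_succ (t μ : σ →₀ ℕ) (i : σ) :
    (mchoose (t + μ + Finsupp.single i 1) μ) * (t i + 1) =
      (μ i + 1) * mchoose (t + μ + Finsupp.single i 1) (μ + Finsupp.single i 1) := by
  classical
  unfold mchoose
  have hm : ∀ f : σ → ℕ, ∏ h, f h = f i * ∏ x ∈ Finset.univ.erase i, f x := fun f =>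
    (Finset.mul_prod_erase Finset.univ f (Finset.mem_univ i)).symm
  rw [hm, hm]
  have : ∏ x ∈ Finset.univ.erase i, ((t + μ + Finsupp.single i 1 : σ →₀ ℕ) x).choose
      ((μ + Finsupp.single i 1 : σ →₀ ℕ) x) = ∏ x ∈ Finset.univ.erase i,
        ((t + μ + Finsupp.single i 1 : σ →₀ ℕ) x).choose (μ x) := by
    refine Finset.prod_congr rfl fun x hx => ?_
    have hx' : i ≠ x := (Finset.ne_of_mem_erase hx).symm
    simp [Finsupp.single_apply, hx']
  rw [this]
  have key : (t i + μ i + 1).choose (μ i) * (t i + 1) =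
      (μ i + 1) * (t i + μ i + 1).choose (μ i + 1) := by
    have := Nat.choose_succ_right_eq (t i + μ i + 1) (μ i)
    have h2 : t i + μ i + 1 - μ i = t i + 1 := by omega
    rw [h2] at this
    linarith
  simp only [Finsupp.add_apply, Finsupp.single_eq_same]
  rw [mul_right_comm, key]; ring

lemma pderiv_hasse (μ : σ →₀ ℕ) (i : σ) (P : MvPolynomial σ R) :
    pderiv i (hasse μ P) = ((μ i + 1 : ℕ) : R) • hasse (μ + Finsupp.single i 1) P := by
  ext t
  rw [coeff_pderiv, coeff_hasse, coeff_smul, coeff_hasse]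
  have h := mchoose_succ t μ i
  have e1 : t + Finsupp.single i 1 + μ = t + μ + Finsupp.single i 1 := by abel
  have e2 : t + (μ + Finsupp.single i 1) = t + μ + Finsupp.single i 1 := by abel
  rw [e1, e2, smul_eq_mul]
  have h' := congrArg (Nat.cast : ℕ → R) h
  push_cast at h' ⊢
  linear_combination (coeff (t + μ + Finsupp.single i 1) P) * h'

end Hasse

section Shift
variable {σ : Type*} [Fintype σ] {K : Type*} [Field K]

/-- Translation of a polynomial. -/
noncomputable def shift (a : σ → K) : MvPolynomial σ K →ₐ[K] MvPolynomial σ K :=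
  aeval (fun i => X i + C (a i))

@[simp] lemma shift_X (a : σ → K) (i : σ) : shift a (X i) = X i + C (a i) := by simp [shift]
@[simp] lemma shift_C (a : σ → K) (c : K) : shift a (C c) = C c := by
  simp [shift, MvPolynomial.algebraMap_eq]

lemma shift_shift (a b : σ → K) (P : MvPolynomial σ K) :
    shift a (shift b P) = shift (a + b) P := by
  have : (shift a).comp (shift b) = shift (a + b) := by
    apply MvPolynomial.algHom_ext
    intro i
    simp [add_assoc]
  exact DFunLike.congr_fun this P

lemma shift_zero (P : MvPolynomial σ K) : shift 0 P = P := by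
  have : shift (0 : σ → K) = AlgHom.id K _ := by
    apply MvPolynomial.algHom_ext
    intro i
    simp
  simp [this]

lemma shift_injective (a : σ → K) : Function.Injective (shift a) := by
  intro P Q h
  have := congrArg (shift (-a)) h
  simpa [shift_shift, shift_zero] using this

lemma pderiv_shift (a : σ → K) (i : σ) (P : MvPolynomial σ K) :
    pderiv i (shift a P) = shift a (pderiv i P) := by
  classical
  induction P using MvPolynomial.induction_on with
  | C c => simp
  | add p q hp hq => simp [hp, hq]
  | mul_X p j hp =>
    simp only [map_mul, Derivation.leibniz, shift_X, map_add, hp, pderiv_X, pderiv_C, smul_eq_mul]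
    by_cases h : j = i
    · subst h; simp
    · simp [h]

lemma hasse_shift [CharZero K] (a : σ → K) (μ : σ →₀ ℕ) (P : MvPolynomial σ K) :
    hasse μ (shift a P) = shift a (hasse μ P) := by
  classical
  have key : ∀ n : ℕ, ∀ μ : σ →₀ ℕ, (∑ i, μ i) = n →
      hasse μ (shift a P) = shift a (hasse μ P) := by
    intro n
    induction n with
    | zero =>
      intro μ hμ
      have : μ = 0 := by
        ext i
        have := Finset.sum_eq_zero_iff.mp hμ i (Finset.mem_univ i)
        simpa using this
      subst this
      simp [hasse_zero]
    | succ n ih =>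
      intro μ hμ
      obtain ⟨i, hi⟩ : ∃ i, μ i ≠ 0 := by
        by_contra hcon
        push Not at hcon
        simp [hcon] at hμ
      set ν := μ - Finsupp.single i 1 with hν
      have hμν : μ = ν + Finsupp.single i 1 := by
        rw [hν, tsub_add_cancel_of_le]
        rw [Finsupp.single_le_iff]; omega
      have hsum : ∑ j, ν j = n := by
        rw [hμν] at hμ
        simp only [Finsupp.add_apply, Finset.sum_add_distrib] at hμ
        have : ∑ j, (Finsupp.single i 1 : σ →₀ ℕ) j = 1 := by
          simp [Finsupp.single_apply]
        omega
      have h1 := pderiv_hasse ν i (shift a P)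
      rw [ih ν hsum, pderiv_shift, pderiv_hasse, ← hμν, map_smul] at h1
      have hne : ((ν i + 1 : ℕ) : K) ≠ 0 := Nat.cast_ne_zero.mpr (Nat.succ_ne_zero _)
      exact (smul_right_injective _ hne h1).symm
  exact key _ μ rfl

lemma constCoeff_shift (a : σ → K) (P : MvPolynomial σ K) :
    coeff 0 (shift a P) = eval a P := by
  have h : (constantCoeff (R := K) (σ := σ)).comp (shift a).toRingHom = eval a := by
    apply MvPolynomial.ringHom_ext
    · intro c; simp
    · intro i; simp
  have := DFunLike.congr_fun h P
  simpa [constantCoeff_eq] using this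

lemma coeff_shift [CharZero K] (a : σ → K) (μ : σ →₀ ℕ) (P : MvPolynomial σ K) :
    coeff μ (shift a P) = eval a (hasse μ P) := by
  rw [← constCoeff_shift, ← hasse_shift, coeff_hasse]
  simp [mchoose_self]

end Shift
end RothThm

namespace RothThm
open MvPolynomial

section Wronskian
variable {σ : Type*} [Fintype σ] {K : Type*} [Field K] [CharZero K] {k : ℕ}

/-- `c` annihilates all Hasse derivatives of order `< n` of the tuple `φ`. -/
def Ann (φ : Fin k → MvPolynomial σ K) (n : ℕ) (c : Fin k → MvPolynomial σ K) : Prop :=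
  ∀ μ : σ →₀ ℕ, ∑ h, μ h < n → ∑ j, c j * hasse μ (φ j) = 0

/-- The same over the fraction field. -/
noncomputable def AnnF (φ : Fin k → MvPolynomial σ K) (n : ℕ) :
    Submodule (FractionRing (MvPolynomial σ K)) (Fin k → FractionRing (MvPolynomial σ K)) where
  carrier := {c | ∀ μ : σ →₀ ℕ, ∑ h, μ h < n →
    ∑ j, c j * algebraMap (MvPolynomial σ K) (FractionRing (MvPolynomial σ K)) (hasse μ (φ j)) = 0}
  add_mem' := by
    intro a b ha hb μ hμ
    simp only [Pi.add_apply, add_mul, Finset.sum_add_distrib, ha μ hμ, hb μ hμ, add_zero]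
  zero_mem' := by intro μ _; simp
  smul_mem' := by
    intro r a ha μ hμ
    simp only [Pi.smul_apply, smul_eq_mul, mul_assoc, ← Finset.mul_sum, ha μ hμ, mul_zero]

lemma clear_denoms (c : Fin k → FractionRing (MvPolynomial σ K)) :
    ∃ (b : MvPolynomial σ K) (c' : Fin k → MvPolynomial σ K), b ≠ 0 ∧
      ∀ j, algebraMap (MvPolynomial σ K) (FractionRing (MvPolynomial σ K)) (c' j) =
        algebraMap (MvPolynomial σ K) (FractionRing (MvPolynomial σ K)) b * c j := by
  obtain ⟨b, hb⟩ := IsLocalization.exist_integer_multiples_of_finite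
    (nonZeroDivisors (MvPolynomial σ K)) c
  choose c' hc' using hb
  refine ⟨b, c', nonZeroDivisors.coe_ne_zero b, fun j => ?_⟩
  rw [hc' j, Algebra.smul_def]

lemma annF_iff (φ : Fin k → MvPolynomial σ K) (n : ℕ)
    {c : Fin k → FractionRing (MvPolynomial σ K)} {b : MvPolynomial σ K}
    {c' : Fin k → MvPolynomial σ K} (hb : b ≠ 0)
    (h : ∀ j, algebraMap (MvPolynomial σ K) (FractionRing (MvPolynomial σ K)) (c' j) =
        algebraMap (MvPolynomial σ K) (FractionRing (MvPolynomial σ K)) b * c j) :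
    c ∈ AnnF φ n ↔ Ann φ n c' := by
  have hinj := IsFractionRing.injective (MvPolynomial σ K) (FractionRing (MvPolynomial σ K))
  have hb' : algebraMap (MvPolynomial σ K) (FractionRing (MvPolynomial σ K)) b ≠ 0 := by
    rw [Ne, map_eq_zero_iff _ hinj]; exact hb
  have key : ∀ μ : σ →₀ ℕ, algebraMap (MvPolynomial σ K) (FractionRing (MvPolynomial σ K))
      (∑ j, c' j * hasse μ (φ j)) =
      algebraMap (MvPolynomial σ K) (FractionRing (MvPolynomial σ K)) b *
       ∑ j, c j * algebraMap (MvPolynomial σ K) (FractionRing (MvPolynomial σ K))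
        (hasse μ (φ j)) := by
    intro μ
    rw [map_sum, Finset.mul_sum]
    refine Finset.sum_congr rfl fun j _ => ?_
    rw [map_mul, h j, mul_assoc]
  constructor
  · intro hc μ hμ
    have := key μ
    rw [hc μ hμ, mul_zero, map_eq_zero_iff _ hinj] at this
    exact this
  · intro hc μ hμ
    have := key μ
    rw [hc μ hμ, map_zero] at this
    exact (mul_eq_zero.mp this.symm).resolve_left hb'

lemma annF_iff' (φ : Fin k → MvPolynomial σ K) (n : ℕ) (c' : Fin k → MvPolynomial σ K) :
    (fun j => algebraMap (MvPolynomial σ K) (FractionRing (MvPolynomial σ K)) (c' j)) ∈ AnnF φ n ↔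
      Ann φ n c' :=
  annF_iff φ n (b := 1) one_ne_zero (by simp)

lemma annF_anti (φ : Fin k → MvPolynomial σ K) (n : ℕ) : AnnF φ (n + 1) ≤ AnnF φ n :=
  fun _ hc μ hμ => hc μ (by omega)

lemma pderiv_ann (φ : Fin k → MvPolynomial σ K) (c : Fin k → MvPolynomial σ K) (μ : σ →₀ ℕ)
    (h : ∑ j, c j * hasse μ (φ j) = 0) (i : σ) :
    ∑ j, pderiv i (c j) * hasse μ (φ j) +
      ((μ i + 1 : ℕ) : K) • ∑ j, c j * hasse (μ + Finsupp.single i 1) (φ j) = 0 := by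
  have h2 := congrArg (pderiv i) h
  rw [map_sum, map_zero] at h2
  rw [← h2, Finset.smul_sum, ← Finset.sum_add_distrib]
  refine Finset.sum_congr rfl fun j _ => ?_
  rw [Derivation.leibniz, pderiv_hasse, smul_eq_mul, smul_eq_mul, mul_smul_comm]
  ring

lemma sum_add_single (μ : σ →₀ ℕ) (i : σ) :
    ∑ h, (μ + Finsupp.single i 1 : σ →₀ ℕ) h = ∑ h, μ h + 1 := by
  classical
  simp [Finsupp.add_apply, Finset.sum_add_distrib, Finsupp.single_apply]

lemma exists_eq_add_single (μ : σ →₀ ℕ) (n : ℕ) (h : ∑ h, μ h = n + 1) :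
    ∃ (ν : σ →₀ ℕ) (i : σ), μ = ν + Finsupp.single i 1 ∧ ∑ h, ν h = n := by
  obtain ⟨i, hi⟩ : ∃ i, μ i ≠ 0 := by
    by_contra hcon
    push Not at hcon
    simp [hcon] at h
  have hμν : μ = (μ - Finsupp.single i 1) + Finsupp.single i 1 := by
    rw [tsub_add_cancel_of_le]
    rw [Finsupp.single_le_iff]; omega
  refine ⟨_, i, hμν, ?_⟩
  rw [hμν, sum_add_single] at h
  omega

lemma annF_stab (φ : Fin k → MvPolynomial σ K) (n : ℕ) (h : AnnF φ n = AnnF φ (n + 1)) :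
    AnnF φ (n + 1) = AnnF φ (n + 2) := by
  apply le_antisymm _ (annF_anti φ (n + 1))
  intro c hc
  obtain ⟨b, c', hb, hbc⟩ := clear_denoms c
  rw [annF_iff φ _ hb hbc] at hc ⊢
  have hd : ∀ i, Ann φ (n + 1) (fun j => pderiv i (c' j)) := by
    intro i
    rw [← annF_iff', ← h, annF_iff']
    intro μ hμ
    have h1 := pderiv_ann φ c' μ (hc μ (by omega)) i
    rw [hc (μ + Finsupp.single i 1) (by rw [sum_add_single]; omega), smul_zero, add_zero] at h1
    exact h1
  intro μ hμ
  rcases Nat.lt_or_ge (∑ h, μ h) (n + 1) with h1 | h1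
  · exact hc μ h1
  · obtain ⟨ν, i, rfl, hν⟩ := exists_eq_add_single μ n (by omega)
    have h2 := pderiv_ann φ c' ν (hc ν (by omega)) i
    rw [hd i ν (by omega), zero_add] at h2
    have hne : ((ν i + 1 : ℕ) : K) ≠ 0 := Nat.cast_ne_zero.mpr (Nat.succ_ne_zero _)
    exact (smul_eq_zero.mp h2).resolve_left hne

lemma annF_stab' (φ : Fin k → MvPolynomial σ K) (n : ℕ) (h : AnnF φ n = AnnF φ (n + 1)) (d : ℕ) :
    AnnF φ n = AnnF φ (n + d) ∧ AnnF φ (n + d) = AnnF φ (n + d + 1) := by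
  induction d with
  | zero => exact ⟨rfl, h⟩
  | succ d ih => exact ⟨ih.1.trans ih.2, annF_stab φ _ ih.2⟩

lemma ann_all (φ : Fin k → MvPolynomial σ K) (hφ : LinearIndependent K φ)
    (c : Fin k → FractionRing (MvPolynomial σ K)) (hc : ∀ n, c ∈ AnnF φ n) : c = 0 := by
  obtain ⟨b, c', hb, hbc⟩ := clear_denoms c
  have hinj := IsFractionRing.injective (MvPolynomial σ K) (FractionRing (MvPolynomial σ K))
  have hb' : algebraMap (MvPolynomial σ K) (FractionRing (MvPolynomial σ K)) b ≠ 0 := by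
    rw [Ne, map_eq_zero_iff _ hinj]; exact hb
  have hc' : ∀ μ : σ →₀ ℕ, ∑ j, c' j * hasse μ (φ j) = 0 := fun μ =>
    (annF_iff φ (∑ h, μ h + 1) hb hbc).mp (hc _) μ (by omega)
  have hz : ∀ j, c' j = 0 := by
    intro j
    apply MvPolynomial.funext
    intro a
    rw [map_zero]
    have hP : ∑ j, eval a (c' j) • φ j = 0 := by
      apply shift_injective a
      rw [map_zero]
      ext μ
      rw [coeff_shift, map_sum, map_sum, coeff_zero]
      have := congrArg (eval a) (hc' μ)
      rw [map_sum, map_zero] at this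
      rw [← this]
      refine Finset.sum_congr rfl fun j _ => ?_
      rw [map_smul, smul_eval, map_mul]
    exact Fintype.linearIndependent_iff.mp hφ _ hP j
  ext j
  have := hbc j
  rw [hz j, map_zero] at this
  exact (mul_eq_zero.mp this.symm).resolve_left hb'

lemma annF_bot (φ : Fin k → MvPolynomial σ K) (hφ : LinearIndependent K φ) : AnnF φ k = ⊥ := by
  have hstable : ∀ n, n ≤ k → AnnF φ n = AnnF φ (n + 1) → AnnF φ k = ⊥ := by
    intro n hn h
    rw [eq_bot_iff]
    intro c hc
    rw [Submodule.mem_bot]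
    apply ann_all φ hφ
    intro N
    have h1 : c ∈ AnnF φ n := by
      obtain ⟨d, rfl⟩ := Nat.exists_eq_add_of_le hn
      rw [(annF_stab' φ n h d).1]; exact hc
    rcases Nat.lt_or_ge N n with h2 | h2
    · intro μ hμ; exact h1 μ (by omega)
    · obtain ⟨d, rfl⟩ := Nat.exists_eq_add_of_le h2
      rw [← (annF_stab' φ n h d).1]; exact h1
  by_contra hcon
  have hlt : ∀ n, n ≤ k → AnnF φ (n + 1) < AnnF φ n := fun n hn =>
    lt_of_le_of_ne (annF_anti φ n) fun h => hcon (hstable n hn h.symm)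
  have hrank : ∀ n, n ≤ k + 1 →
      Module.finrank (FractionRing (MvPolynomial σ K)) (AnnF φ n) + n ≤ k := by
    intro n
    induction n with
    | zero =>
      intro _
      have := Submodule.finrank_le (AnnF φ 0)
      simpa using this
    | succ n ih =>
      intro hn
      have h1 := ih (by omega)
      have h2 := Submodule.finrank_lt_finrank_of_lt (hlt n (by omega))
      omega
  have := hrank (k + 1) le_rfl
  omega

theorem wronskian (φ : Fin k → MvPolynomial σ K) (hφ : LinearIndependent K φ) :
    ∃ μ : Fin k → (σ →₀ ℕ), (∀ i, ∑ h, μ i h < k) ∧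
      (Matrix.of fun i j => hasse (μ i) (φ j)).det ≠ 0 := by
  classical
  set F := FractionRing (MvPolynomial σ K) with hF
  let v : (σ →₀ ℕ) → (Fin k → F) := fun μ j => algebraMap (MvPolynomial σ K) F (hasse μ (φ j))
  let S : Set (Fin k → F) := v '' {μ | ∑ h, μ h < k}
  have hspan : Submodule.span F S = ⊤ := by
    by_contra hne
    obtain ⟨f, hf0, hf⟩ := Submodule.exists_le_ker_of_lt_top _ (lt_top_iff_ne_top.mpr hne)
    apply hf0
    have hfv : ∀ w : Fin k → F, f w = ∑ j, f (Pi.single j 1) * w j := by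
      intro w
      conv_lhs => rw [pi_eq_sum_univ' w]
      rw [map_sum]
      refine Finset.sum_congr rfl fun j _ => ?_
      rw [map_smul, smul_eq_mul, mul_comm]
    have hmem : (fun j => f (Pi.single j 1)) ∈ AnnF φ k := by
      intro μ hμ
      have h1 : v μ ∈ Submodule.span F S := Submodule.subset_span ⟨μ, hμ, rfl⟩
      have h2 := hf h1
      rw [LinearMap.mem_ker, hfv] at h2
      exact h2
    rw [annF_bot φ hφ, Submodule.mem_bot] at hmem
    ext w
    have := congrFun hmem w
    simpa using this
  obtain ⟨B, hBS, hBspan, hBli⟩ := exists_linearIndependent F S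
  let bas : Module.Basis B F (Fin k → F) := Module.Basis.mk hBli (by
    rw [Subtype.range_coe, hBspan, hspan])
  have : Fintype B := FiniteDimensional.fintypeBasisIndex bas
  have hcard : Fintype.card B = k := by
    rw [← Module.finrank_eq_card_basis bas]; simp
  let e : Fin k ≃ B := (Fintype.equivFinOfCardEq hcard).symm
  have hch : ∀ i : Fin k, ∃ μ : σ →₀ ℕ, ∑ h, μ h < k ∧ v μ = (e i : Fin k → F) := fun i =>
    hBS (e i).2
  choose μ hμ1 hμ2 using hch
  refine ⟨μ, hμ1, ?_⟩
  have hli : LinearIndependent F (fun i => v (μ i)) := by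
    have := hBli.comp e e.injective
    have he : (fun i => v (μ i)) = (Subtype.val ∘ e) := by
      ext1 i
      exact hμ2 i
    rw [he]
    exact this
  intro hdet
  have h1 : ((Matrix.of fun i j => hasse (μ i) (φ j)).map
      (algebraMap (MvPolynomial σ K) F)).det = 0 := by
    have := RingHom.map_det (algebraMap (MvPolynomial σ K) F)
      (Matrix.of fun i j => hasse (μ i) (φ j))
    rw [hdet, map_zero] at this
    exact this.symm
  have h2 : IsUnit ((Matrix.of fun i j => hasse (μ i) (φ j)).map
      (algebraMap (MvPolynomial σ K) F)) := by
    rw [← Matrix.linearIndependent_rows_iff_isUnit]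
    exact hli
  rw [Matrix.isUnit_iff_isUnit_det, h1] at h2
  exact not_isUnit_zero h2

end Wronskian
end RothThm

namespace RothThm
open MvPolynomial

section WGE
variable {σ : Type*} [Fintype σ] {R : Type*} [CommRing R]

/-- All monomials of `P` have weight at least `c`. -/
def WGE (w : σ → ℝ) (c : ℝ) (P : MvPolynomial σ R) : Prop :=
  ∀ s : σ →₀ ℕ, coeff s P ≠ 0 → c ≤ ∑ h, (s h : ℝ) * w h

lemma WGE.mono {w : σ → ℝ} {c d : ℝ} {P : MvPolynomial σ R} (h : WGE w c P) (hd : d ≤ c) :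
    WGE w d P := fun s hs => hd.trans (h s hs)

lemma WGE.zero (w : σ → ℝ) (c : ℝ) : WGE w c (0 : MvPolynomial σ R) := by
  intro s hs; simp at hs

lemma WGE.of_nonneg {w : σ → ℝ} (hw : ∀ h, 0 ≤ w h) (P : MvPolynomial σ R) : WGE w 0 P :=
  fun s _ => Finset.sum_nonneg fun h _ => mul_nonneg (Nat.cast_nonneg _) (hw h)

lemma WGE.one (w : σ → ℝ) : WGE w 0 (1 : MvPolynomial σ R) := by
  classical
  intro s hs
  rw [coeff_one] at hs
  have : s = 0 := by
    by_contra h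
    exact hs (if_neg (Ne.symm h))
  simp [this]

lemma WGE.add {w : σ → ℝ} {c : ℝ} {P Q : MvPolynomial σ R} (hP : WGE w c P) (hQ : WGE w c Q) :
    WGE w c (P + Q) := by
  intro s hs
  by_cases h : coeff s P = 0
  · apply hQ s
    intro h2
    apply hs
    rw [coeff_add, h, h2, add_zero]
  · exact hP s h

lemma WGE.neg {w : σ → ℝ} {c : ℝ} {P : MvPolynomial σ R} (hP : WGE w c P) :
    WGE w c (-P) := by
  intro s hs
  apply hP s
  intro h; apply hs; simp [h]

lemma WGE.sum {w : σ → ℝ} {c : ℝ} {ι : Type*} (T : Finset ι) (f : ι → MvPolynomial σ R)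
    (h : ∀ i ∈ T, WGE w c (f i)) : WGE w c (∑ i ∈ T, f i) :=
  Finset.sum_induction f (WGE w c) (fun _ _ => WGE.add) (WGE.zero w c) h

lemma WGE.mul {w : σ → ℝ} {c d : ℝ} {P Q : MvPolynomial σ R} (hP : WGE w c P) (hQ : WGE w d Q) :
    WGE w (c + d) (P * Q) := by
  classical
  intro s hs
  rw [coeff_mul] at hs
  obtain ⟨⟨a, b⟩, hab, hne⟩ := Finset.exists_ne_zero_of_sum_ne_zero hs
  rw [Finset.HasAntidiagonal.mem_antidiagonal] at hab
  have h1 := hP a (left_ne_zero_of_mul hne)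
  have h2 := hQ b (right_ne_zero_of_mul hne)
  have : s = a + b := hab.symm
  subst this
  have e : ∑ h, ((a + b : σ →₀ ℕ) h : ℝ) * w h = ∑ h, (a h : ℝ) * w h + ∑ h, (b h : ℝ) * w h := by
    rw [← Finset.sum_add_distrib]
    refine Finset.sum_congr rfl fun h _ => ?_
    rw [Finsupp.add_apply]; push_cast; ring
  rw [e]; exact add_le_add h1 h2

lemma WGE.prod {w : σ → ℝ} {ι : Type*} (T : Finset ι) (c : ι → ℝ) (f : ι → MvPolynomial σ R)
    (h : ∀ i ∈ T, WGE w (c i) (f i)) : WGE w (∑ i ∈ T, c i) (∏ i ∈ T, f i) := by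
  classical
  induction T using Finset.induction_on with
  | empty => simpa using WGE.one w
  | insert a T ha ih =>
    rw [Finset.sum_insert ha, Finset.prod_insert ha]
    exact (h a (Finset.mem_insert_self _ _)).mul
      (ih fun i hi => h i (Finset.mem_insert_of_mem hi))

lemma WGE.det {w : σ → ℝ} {k : ℕ} (c : Fin k → ℝ) (M : Matrix (Fin k) (Fin k) (MvPolynomial σ R))
    (h : ∀ i j, WGE w (c j) (M i j)) : WGE w (∑ j, c j) M.det := by
  rw [Matrix.det_apply]
  apply WGE.sum
  intro τ _
  have h1 : WGE w (∑ j, c j) (∏ i, M (τ i) i) := WGE.prod _ _ _ fun i _ => h (τ i) i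
  rcases Int.units_eq_one_or (Equiv.Perm.sign τ) with h2 | h2
  · rw [h2, one_smul]; exact h1
  · rw [h2, Units.neg_smul, one_smul]; exact h1.neg

lemma WGE.hasse {w : σ → ℝ} {c : ℝ} {P : MvPolynomial σ R} (hP : WGE w c P) (μ : σ →₀ ℕ) :
    WGE w (c - ∑ h, (μ h : ℝ) * w h) (hasse μ P) := by
  intro s hs
  rw [coeff_hasse] at hs
  have h1 := hP _ (left_ne_zero_of_mul hs)
  have e : ∑ h, ((s + μ : σ →₀ ℕ) h : ℝ) * w h = ∑ h, (s h : ℝ) * w h + ∑ h, (μ h : ℝ) * w h := by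
    rw [← Finset.sum_add_distrib]
    refine Finset.sum_congr rfl fun h _ => ?_
    rw [Finsupp.add_apply]; push_cast; ring
  linarith

/-- Degree bounds in every variable. -/
def DegBd (r : σ → ℕ) (P : MvPolynomial σ R) : Prop :=
  ∀ s : σ →₀ ℕ, coeff s P ≠ 0 → ∀ h, s h ≤ r h

lemma degBd_iff (r : σ → ℕ) (P : MvPolynomial σ R) [DecidableEq σ] :
    DegBd r P ↔ ∀ h, WGE (Pi.single h (-1)) (-(r h : ℝ)) P := by
  have e : ∀ (s : σ →₀ ℕ) (h : σ), ∑ h', (s h' : ℝ) * (Pi.single h (-1) : σ → ℝ) h' = -(s h) := by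
    intro s h
    simp [Pi.single_apply]
  constructor
  · intro hP h s hs
    rw [e]
    have := hP s hs h
    have : (s h : ℝ) ≤ r h := by exact_mod_cast this
    linarith
  · intro hP s hs h
    have := hP h s hs
    rw [e] at this
    have : (s h : ℝ) ≤ r h := by linarith
    exact_mod_cast this

lemma DegBd.hasse {r : σ → ℕ} {P : MvPolynomial σ R} (hP : DegBd r P) (μ : σ →₀ ℕ) :
    DegBd r (hasse μ P) := by
  intro s hs h
  rw [coeff_hasse] at hs
  have h1 := hP _ (left_ne_zero_of_mul hs) h
  rw [Finsupp.add_apply] at h1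
  omega

lemma DegBd.det {r : σ → ℕ} {k : ℕ} (M : Matrix (Fin k) (Fin k) (MvPolynomial σ R))
    (h : ∀ i j, DegBd r (M i j)) : DegBd (fun h => k * r h) M.det := by
  classical
  rw [degBd_iff]
  intro h'
  have := WGE.det (w := Pi.single h' (-1)) (fun _ => -(r h' : ℝ)) M
    (fun i j => (degBd_iff _ _).mp (h i j) h')
  simpa using this

end WGE

section L1
variable {σ : Type*} [Fintype σ]

/-- The sum of the absolute values of the coefficients. -/
noncomputable def l1 (P : MvPolynomial σ ℤ) : ℝ := ∑ s ∈ P.support, |((coeff s P : ℤ) : ℝ)|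

lemma l1_eq {P : MvPolynomial σ ℤ} {T : Finset (σ →₀ ℕ)} (h : P.support ⊆ T) :
    l1 P = ∑ s ∈ T, |((coeff s P : ℤ) : ℝ)| := by
  apply Finset.sum_subset h
  intro s _ hs
  rw [notMem_support_iff.mp hs]; simp

lemma l1_nonneg (P : MvPolynomial σ ℤ) : 0 ≤ l1 P := Finset.sum_nonneg fun _ _ => abs_nonneg _

lemma l1_zero : l1 (0 : MvPolynomial σ ℤ) = 0 := by simp [l1]

lemma l1_add_le (P Q : MvPolynomial σ ℤ) : l1 (P + Q) ≤ l1 P + l1 Q := by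
  classical
  rw [l1_eq (support_add (p := P) (q := Q)), l1_eq (T := P.support ∪ Q.support)
    Finset.subset_union_left, l1_eq (P := Q) (T := P.support ∪ Q.support)
    Finset.subset_union_right, ← Finset.sum_add_distrib]
  refine Finset.sum_le_sum fun s _ => ?_
  rw [coeff_add]; push_cast; exact abs_add_le _ _

lemma l1_neg (P : MvPolynomial σ ℤ) : l1 (-P) = l1 P := by
  simp [l1]

lemma l1_sum_le {ι : Type*} (T : Finset ι) (f : ι → MvPolynomial σ ℤ) :
    l1 (∑ i ∈ T, f i) ≤ ∑ i ∈ T, l1 (f i) :=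
  Finset.le_sum_of_subadditive l1 l1_zero.le l1_add_le T f

lemma l1_monomial_le (s : σ →₀ ℕ) (c : ℤ) : l1 (monomial s c) ≤ |(c : ℝ)| := by
  classical
  rw [l1_eq (T := {s}) support_monomial_subset]
  simp

lemma l1_monomial_mul_le (s : σ →₀ ℕ) (c : ℤ) (Q : MvPolynomial σ ℤ) :
    l1 (monomial s c * Q) ≤ |(c : ℝ)| * l1 Q := by
  classical
  conv_lhs => rw [Q.as_sum, Finset.mul_sum]
  refine (l1_sum_le _ _).trans ?_
  conv_rhs => rw [l1, Finset.mul_sum]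
  refine Finset.sum_le_sum fun t _ => ?_
  rw [monomial_mul]
  refine (l1_monomial_le _ _).trans ?_
  push_cast
  rw [abs_mul]

lemma l1_mul_le (P Q : MvPolynomial σ ℤ) : l1 (P * Q) ≤ l1 P * l1 Q := by
  classical
  conv_lhs => rw [P.as_sum, Finset.sum_mul]
  refine (l1_sum_le _ _).trans ?_
  conv_rhs => rw [l1, Finset.sum_mul]
  exact Finset.sum_le_sum fun t _ => l1_monomial_mul_le _ _ _

lemma l1_one_le : l1 (1 : MvPolynomial σ ℤ) ≤ 1 := by
  have := l1_monomial_le (σ := σ) 0 1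
  simpa using this

lemma l1_prod_le {ι : Type*} (T : Finset ι) (f : ι → MvPolynomial σ ℤ) (A : ℝ) (hA : 0 ≤ A)
    (h : ∀ i ∈ T, l1 (f i) ≤ A) : l1 (∏ i ∈ T, f i) ≤ A ^ T.card := by
  classical
  induction T using Finset.induction_on with
  | empty => simpa using l1_one_le
  | insert a T ha ih =>
    rw [Finset.prod_insert ha, Finset.card_insert_of_notMem ha, pow_succ']
    refine (l1_mul_le _ _).trans ?_
    exact mul_le_mul (h a (Finset.mem_insert_self _ _))
      (ih fun i hi => h i (Finset.mem_insert_of_mem hi)) (l1_nonneg _) hA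

lemma l1_det_le {k : ℕ} (M : Matrix (Fin k) (Fin k) (MvPolynomial σ ℤ)) (A : ℝ) (hA : 0 ≤ A)
    (h : ∀ i j, l1 (M i j) ≤ A) : l1 M.det ≤ k.factorial * A ^ k := by
  rw [Matrix.det_apply]
  refine (l1_sum_le _ _).trans ?_
  have : ∀ τ ∈ (Finset.univ : Finset (Equiv.Perm (Fin k))),
      l1 (Equiv.Perm.sign τ • ∏ i, M (τ i) i) ≤ A ^ k := by
    intro τ _
    have h1 : l1 (∏ i, M (τ i) i) ≤ A ^ k := by
      have := l1_prod_le Finset.univ (fun i => M (τ i) i) A hA fun i _ => h _ _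
      simpa using this
    rcases Int.units_eq_one_or (Equiv.Perm.sign τ) with h2 | h2
    · rw [h2, one_smul]; exact h1
    · rw [h2, Units.neg_smul, one_smul, l1_neg]; exact h1
  refine (Finset.sum_le_card_nsmul _ _ _ this).trans ?_
  rw [Finset.card_univ, Fintype.card_perm, Fintype.card_fin, nsmul_eq_mul]

lemma l1_hasse_le {r : σ → ℕ} (P : MvPolynomial σ ℤ) (hP : DegBd r P) (μ : σ →₀ ℕ) :
    l1 (hasse μ P) ≤ 2 ^ (∑ h, r h) * l1 P := by
  conv_lhs => rw [P.as_sum, map_sum]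
  refine (l1_sum_le _ _).trans ?_
  conv_rhs => rw [l1, Finset.mul_sum]
  refine Finset.sum_le_sum fun s hs => ?_
  rw [hasse_monomial]
  refine (l1_monomial_le _ _).trans ?_
  push_cast
  rw [abs_mul, mul_comm]
  refine mul_le_mul_of_nonneg_right ?_ (abs_nonneg _)
  rw [abs_of_nonneg (Nat.cast_nonneg _)]
  have h1 := mchoose_le s μ
  have h2 : ∑ h, s h ≤ ∑ h, r h := Finset.sum_le_sum fun h _ => hP s (mem_support_iff.mp hs) h
  have h3 : mchoose s μ ≤ 2 ^ (∑ h, r h) := h1.trans (Nat.pow_le_pow_right (by norm_num) h2)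
  exact_mod_cast h3

lemma abs_coeff_le_l1 (P : MvPolynomial σ ℤ) (s : σ →₀ ℕ) : |((coeff s P : ℤ) : ℝ)| ≤ l1 P := by
  by_cases hs : s ∈ P.support
  · exact Finset.single_le_sum (f := fun s => |((coeff s P : ℤ) : ℝ)|) (fun _ _ => abs_nonneg _) hs
  · rw [notMem_support_iff.mp hs]; simpa using l1_nonneg P

lemma one_le_l1 {P : MvPolynomial σ ℤ} (hP : P ≠ 0) : 1 ≤ l1 P := by
  obtain ⟨s, hs⟩ := MvPolynomial.ne_zero_iff.mp hP
  refine le_trans ?_ (abs_coeff_le_l1 P s)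
  exact_mod_cast Int.one_le_abs hs

end L1

section Sep
variable {σ υ : Type*} [Fintype σ] [Fintype υ] {R : Type*} [CommRing R]

/-- Product of two polynomials in separate variables. -/
noncomputable def sep (φ : MvPolynomial σ R) (ψ : MvPolynomial υ R) : MvPolynomial (σ ⊕ υ) R :=
  rename Sum.inl φ * rename Sum.inr ψ

lemma exists_sumElim (u : (σ ⊕ υ) →₀ ℕ) :
    ∃ (s : σ →₀ ℕ) (t : υ →₀ ℕ), u = Finsupp.sumElim s t :=
  ⟨_, _, (Finsupp.comapDomain_sumElim_comapDomain u).symm⟩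

lemma sumElim_inj {s s' : σ →₀ ℕ} {t t' : υ →₀ ℕ} :
    Finsupp.sumElim s t = Finsupp.sumElim s' t' ↔ s = s' ∧ t = t' := by
  constructor
  · intro h
    constructor
    · ext i; exact DFunLike.congr_fun h (Sum.inl i)
    · ext i; exact DFunLike.congr_fun h (Sum.inr i)
  · rintro ⟨rfl, rfl⟩; rfl

lemma coeff_sep (φ : MvPolynomial σ R) (ψ : MvPolynomial υ R) (s : σ →₀ ℕ) (t : υ →₀ ℕ) :
    coeff (Finsupp.sumElim s t) (sep φ ψ) = coeff s φ * coeff t ψ := by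
  classical
  unfold sep
  induction φ using MvPolynomial.induction_on' with
  | add p q hp hq => rw [map_add, add_mul, coeff_add, hp, hq, coeff_add, add_mul]
  | monomial a x =>
    induction ψ using MvPolynomial.induction_on' with
    | add p q hp hq => rw [map_add, mul_add, coeff_add, hp, hq, coeff_add, mul_add]
    | monomial b y =>
      rw [rename_monomial, rename_monomial, monomial_mul, ← Finsupp.sumElim_eq_add,
        coeff_monomial, coeff_monomial, coeff_monomial]
      simp only [sumElim_inj]
      by_cases h1 : a = s <;> by_cases h2 : b = t <;> simp [h1, h2]

lemma mchoose_sumElim (s s' : σ →₀ ℕ) (t t' : υ →₀ ℕ) :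
    mchoose (Finsupp.sumElim s t) (Finsupp.sumElim s' t') = mchoose s s' * mchoose t t' := by
  simp [mchoose, Fintype.prod_sum_type]

lemma hasse_sep (φ : MvPolynomial σ R) (ψ : MvPolynomial υ R) (μ : σ →₀ ℕ) (ν : υ →₀ ℕ) :
    hasse (Finsupp.sumElim μ ν) (sep φ ψ) = sep (hasse μ φ) (hasse ν ψ) := by
  ext u
  obtain ⟨s, t, rfl⟩ := exists_sumElim u
  rw [coeff_hasse, ← Finsupp.sumElim_add, coeff_sep, coeff_sep, coeff_hasse, coeff_hasse,
    mchoose_sumElim]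
  push_cast; ring

lemma shift_sep {K : Type*} [Field K] (φ : MvPolynomial σ K) (ψ : MvPolynomial υ K)
    (a : σ ⊕ υ → K) :
    shift a (sep φ ψ) = sep (shift (a ∘ Sum.inl) φ) (shift (a ∘ Sum.inr) ψ) := by
  unfold sep
  rw [map_mul]
  congr 1
  · have : (shift a).comp (rename Sum.inl) = (rename Sum.inl).comp (shift (a ∘ Sum.inl)) := by
      apply MvPolynomial.algHom_ext
      intro i
      simp
    exact DFunLike.congr_fun this φ
  · have : (shift a).comp (rename Sum.inr) = (rename Sum.inr).comp (shift (a ∘ Sum.inr)) := by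
      apply MvPolynomial.algHom_ext
      intro i
      simp
    exact DFunLike.congr_fun this ψ

open Classical in
/-- Coefficient of the monomial `t` in the second group of variables. -/
noncomputable def slice (t : υ →₀ ℕ) (P : MvPolynomial (σ ⊕ υ) R) : MvPolynomial σ R :=
  ∑ u ∈ P.support, if Finsupp.comapDomain Sum.inr u Sum.inr_injective.injOn = t then
    monomial (Finsupp.comapDomain Sum.inl u Sum.inl_injective.injOn) (coeff u P) else 0

lemma coeff_slice (t : υ →₀ ℕ) (P : MvPolynomial (σ ⊕ υ) R) (s : σ →₀ ℕ) :
    coeff s (slice t P) = coeff (Finsupp.sumElim s t) P := by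
  classical
  unfold slice
  rw [coeff_sum, Finset.sum_eq_single (Finsupp.sumElim s t)]
  · rw [Finsupp.comapDomain_inr_sumElim, Finsupp.comapDomain_inl_sumElim]
    simp
  · intro u _ hu
    obtain ⟨s', t', rfl⟩ := exists_sumElim u
    rw [Finsupp.comapDomain_inr_sumElim, Finsupp.comapDomain_inl_sumElim]
    split_ifs with h
    · rw [coeff_monomial, if_neg]
      rintro rfl
      exact hu (by rw [h])
    · simp
  · intro h
    rw [notMem_support_iff.mp h]
    simp

lemma coeff_swap (P : MvPolynomial (σ ⊕ υ) R) (s : σ →₀ ℕ) (t : υ →₀ ℕ) :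
    coeff (Finsupp.sumElim t s) (rename Sum.swap P) = coeff (Finsupp.sumElim s t) P := by
  rw [← Finsupp.mapDomain_swap_sumElim s t, coeff_rename_mapDomain]
  exact Sum.swap_leftInverse.injective

lemma l1_slice_le (t : υ →₀ ℕ) (P : MvPolynomial (σ ⊕ υ) ℤ) : l1 (slice t P) ≤ l1 P := by
  classical
  unfold slice
  refine (l1_sum_le _ _).trans ?_
  conv_rhs => rw [l1]
  refine Finset.sum_le_sum fun u _ => ?_
  split_ifs
  · exact l1_monomial_le _ _
  · rw [l1_zero]; exact abs_nonneg _

lemma l1_swap_le (P : MvPolynomial (σ ⊕ υ) ℤ) : l1 (rename Sum.swap P) ≤ l1 P := by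
  classical
  conv_lhs => rw [P.as_sum, map_sum]
  refine (l1_sum_le _ _).trans ?_
  conv_rhs => rw [l1]
  refine Finset.sum_le_sum fun u _ => ?_
  rw [rename_monomial]
  exact l1_monomial_le _ _

end Sep

section Rank
variable {σ : Type*} [Fintype σ] {K : Type*} [Field K]

lemma unit_eq_single (t : Unit →₀ ℕ) : t = Finsupp.single () (t ()) := by
  ext; simp

theorem rank_factor (P : MvPolynomial (σ ⊕ Unit) K) (hP : P ≠ 0) (ρ : ℕ)
    (hdeg : ∀ s, coeff s P ≠ 0 → s (Sum.inr ()) ≤ ρ) :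
    ∃ (k : ℕ) (φ : Fin k → MvPolynomial σ K) (ψ : Fin k → MvPolynomial Unit K),
      0 < k ∧ k ≤ ρ + 1 ∧ LinearIndependent K φ ∧ LinearIndependent K ψ ∧
      P = ∑ j, sep (φ j) (ψ j) := by
  classical
  let a : Fin (ρ + 1) → MvPolynomial σ K := fun n => slice (Finsupp.single () (n : ℕ)) P
  let S := Submodule.span K (Set.range a)
  have hfd : FiniteDimensional K S := FiniteDimensional.span_of_finite K (Set.finite_range a)
  let b := Module.finBasis K S
  have ha : ∀ n, a n ∈ S := fun n => Submodule.subset_span ⟨n, rfl⟩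
  have hψc : ∀ j (n : Fin (ρ + 1)), coeff (Finsupp.single () (n : ℕ))
      (∑ n : Fin (ρ + 1), monomial (Finsupp.single () (n : ℕ)) (b.repr ⟨a n, ha n⟩ j)) =
      b.repr ⟨a n, ha n⟩ j := by
    intro j n
    rw [coeff_sum, Finset.sum_eq_single n]
    · simp
    · intro n' _ hn'
      rw [coeff_monomial, if_neg]
      intro h
      have := DFunLike.congr_fun h ()
      simp only [Finsupp.single_eq_same] at this
      exact hn' (Fin.ext this)
    · simp
  have hψ0 : ∀ j (n : ℕ), ρ < n → coeff (Finsupp.single () n)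
      (∑ n : Fin (ρ + 1), monomial (Finsupp.single () (n : ℕ)) (b.repr ⟨a n, ha n⟩ j)) = 0 := by
    intro j n hn
    rw [coeff_sum]
    refine Finset.sum_eq_zero fun n' _ => ?_
    rw [coeff_monomial, if_neg]
    intro h
    have := DFunLike.congr_fun h ()
    simp only [Finsupp.single_eq_same] at this
    have := n'.2
    omega
  have hφ : LinearIndependent K (fun j => (b j : MvPolynomial σ K)) := by
    have := b.linearIndependent.map' S.subtype (Submodule.ker_subtype S)
    exact this
  have hrep : ∀ n, a n = ∑ j, b.repr ⟨a n, ha n⟩ j • (b j : MvPolynomial σ K) := by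
    intro n
    have := congrArg (Subtype.val) (b.sum_repr ⟨a n, ha n⟩)
    simp only [Submodule.coe_sum, Submodule.coe_smul] at this
    exact this.symm
  refine ⟨Module.finrank K S, fun j => (b j : MvPolynomial σ K),
    fun j => ∑ n : Fin (ρ + 1), monomial (Finsupp.single () (n : ℕ)) (b.repr ⟨a n, ha n⟩ j),
    ?_, ?_, hφ, ?_, ?_⟩
  · obtain ⟨u, hu⟩ := MvPolynomial.ne_zero_iff.mp hP
    have hd := hdeg u hu
    obtain ⟨s, t, rfl⟩ := exists_sumElim u
    rw [unit_eq_single t] at hu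
    have hn : a ⟨t (), by simpa [Nat.lt_succ_iff] using hd⟩ ≠ 0 := by
      intro h0
      have := congrArg (coeff s) h0
      simp only [a, coeff_slice, coeff_zero] at this
      exact hu this
    have hnt : Nontrivial S := ⟨⟨⟨_, ha _⟩, 0, fun h => hn (congrArg Subtype.val h)⟩⟩
    exact Module.finrank_pos
  · have := finrank_range_le_card (R := K) a
    simpa [Set.finrank] using this
  · rw [Fintype.linearIndependent_iff]
    intro c hc
    have hf : ∀ x (hx : x ∈ S), b.constr K c ⟨x, hx⟩ = 0 := by
      intro x hx
      refine Submodule.span_induction (p := fun x hx => b.constr K c ⟨x, hx⟩ = 0)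
        ?_ ?_ ?_ ?_ hx
      · rintro _ ⟨n, rfl⟩
        rw [Module.Basis.constr_apply_fintype]
        have := congrArg (coeff (Finsupp.single () (n : ℕ))) hc
        rw [coeff_sum, coeff_zero] at this
        rw [← this]
        refine Finset.sum_congr rfl fun j _ => ?_
        rw [coeff_smul, hψc, smul_eq_mul, smul_eq_mul, mul_comm]
        rfl
      · exact map_zero _
      · intro x y hx hy h1 h2
        have : (⟨x + y, S.add_mem hx hy⟩ : S) = ⟨x, hx⟩ + ⟨y, hy⟩ := rfl
        rw [this, map_add, h1, h2, add_zero]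
      · intro r x hx h1
        have : (⟨r • x, S.smul_mem r hx⟩ : S) = r • ⟨x, hx⟩ := rfl
        rw [this, map_smul, h1, smul_zero]
    intro j
    have := hf (b j) (b j).2
    simpa using this
  · ext u
    obtain ⟨s, t, rfl⟩ := exists_sumElim u
    rw [coeff_sum]
    simp only [coeff_sep]
    rw [unit_eq_single t]
    rcases Nat.lt_or_ge ρ (t ()) with h | h
    · simp only [hψ0 _ _ h, mul_zero, Finset.sum_const_zero]
      by_contra hne
      have := hdeg _ hne
      simp at this
      omega
    · have h1 := congrArg (coeff s) (hrep ⟨t (), by omega⟩)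
      simp only [a, coeff_slice] at h1
      rw [h1, coeff_sum]
      refine Finset.sum_congr rfl fun j _ => ?_
      rw [hψc j ⟨t (), by omega⟩, coeff_smul, smul_eq_mul, mul_comm]

end Rank
end RothThm

namespace RothThm
open MvPolynomial

section Univ

/-- A polynomial in one variable, as a univariate polynomial. -/
noncomputable def toP {R : Type*} [CommRing R] : MvPolynomial Unit R →ₐ[R] Polynomial R :=
  aeval (fun _ => Polynomial.X)

lemma toP_coeff {R : Type*} [CommRing R] (U : MvPolynomial Unit R) (n : ℕ) :
    (toP U).coeff n = coeff (Finsupp.single () n) U := by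
  classical
  induction U using MvPolynomial.induction_on' with
  | add p q hp hq => rw [map_add, Polynomial.coeff_add, hp, hq, coeff_add]
  | monomial s c =>
    rw [unit_eq_single s, toP, aeval_monomial, coeff_monomial, Finsupp.prod_single_index (by simp)]
    rw [← Polynomial.C_eq_algebraMap, Polynomial.coeff_C_mul_X_pow]
    have : (Finsupp.single () (s ()) = Finsupp.single () n) ↔ n = s () := by
      constructor
      · intro h
        have := DFunLike.congr_fun h ()
        simpa using this.symm
      · rintro rfl; rfl
    simp only [this]

lemma toP_map (U : MvPolynomial Unit ℤ) :
    toP (map (Int.castRingHom ℚ) U) = (toP U).map (Int.castRingHom ℚ) := by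
  ext n
  rw [toP_coeff, Polynomial.coeff_map, toP_coeff, coeff_map]

lemma toP_shift (U : MvPolynomial Unit ℚ) (x : ℚ) :
    toP (shift (fun _ => x) U) = (toP U).comp (Polynomial.X + Polynomial.C x) := by
  have : toP.comp (shift (fun _ : Unit => x)) =
      (Polynomial.aeval (Polynomial.X + Polynomial.C x)).comp toP := by
    apply MvPolynomial.algHom_ext
    intro i
    simp [toP, Polynomial.algebraMap_eq]
  have := DFunLike.congr_fun this U
  simpa [Polynomial.aeval_def, Polynomial.comp] using this

lemma prim_lin (x : ℚ) (n : ℕ) : ((Polynomial.C (x.den : ℤ) * Polynomial.X - Polynomial.C x.num :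
    Polynomial ℤ) ^ n).IsPrimitive := by
  have h1 : (Polynomial.C (x.den : ℤ) * Polynomial.X - Polynomial.C x.num :
      Polynomial ℤ).IsPrimitive := by
    intro r hr
    rw [Polynomial.C_dvd_iff_dvd_coeff] at hr
    have a := hr 0
    have b := hr 1
    simp only [Polynomial.coeff_sub, Polynomial.coeff_C_mul, Polynomial.coeff_X_zero, mul_zero,
      Polynomial.coeff_C_zero, zero_sub, dvd_neg] at a
    simp only [Polynomial.coeff_sub, Polynomial.coeff_C_mul, Polynomial.coeff_X_one, mul_one,
      Polynomial.coeff_C, one_ne_zero, if_false, sub_zero] at b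
    have hc : IsCoprime (x.num) (x.den : ℤ) := by
      rw [Int.isCoprime_iff_nat_coprime]
      simpa using x.reduced
    exact hc.isUnit_of_dvd' a b
  induction n with
  | zero => simp
  | succ n ih => rw [pow_succ]; exact ih.mul h1

theorem univ_index (U : MvPolynomial Unit ℤ) (hU : U ≠ 0) (x : ℚ) :
    ∃ n : ℕ, coeff (Finsupp.single () n)
      (shift (fun _ => x) (map (Int.castRingHom ℚ) U)) ≠ 0 ∧ (x.den : ℝ) ^ n ≤ l1 U := by
  classical
  set G := shift (fun _ => x) (map (Int.castRingHom ℚ) U) with hG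
  have hinj : Function.Injective (Int.castRingHom ℚ) := Int.cast_injective
  have hG0 : G ≠ 0 := by
    intro h
    have h1 : map (Int.castRingHom ℚ) U = 0 := shift_injective _ (by rw [← hG, h, map_zero])
    exact hU (MvPolynomial.map_injective _ hinj (by rw [h1, map_zero]))
  have hex : ∃ n : ℕ, coeff (Finsupp.single () n) G ≠ 0 := by
    obtain ⟨s, hs⟩ := MvPolynomial.ne_zero_iff.mp hG0
    exact ⟨s (), by rwa [← unit_eq_single]⟩
  refine ⟨Nat.find hex, Nat.find_spec hex, ?_⟩
  set n := Nat.find hex with hn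
  have hmin : ∀ d < n, (toP G).coeff d = 0 := by
    intro d hd
    rw [toP_coeff]
    by_contra h
    exact Nat.find_min hex hd h
  have h1 : (Polynomial.X - Polynomial.C x) ^ n ∣ (toP U).map (Int.castRingHom ℚ) := by
    rw [Polynomial.X_sub_C_pow_dvd_iff, ← toP_map, ← toP_shift, Polynomial.X_pow_dvd_iff]
    exact hmin
  have hden : (x.den : ℚ) ≠ 0 := Nat.cast_ne_zero.mpr x.den_nz
  have h2 : ((Polynomial.C (x.den : ℤ) * Polynomial.X - Polynomial.C x.num : Polynomial ℤ) ^ n).map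
      (Int.castRingHom ℚ) ∣ (toP U).map (Int.castRingHom ℚ) := by
    have e : ((Polynomial.C (x.den : ℤ) * Polynomial.X - Polynomial.C x.num :
        Polynomial ℤ) ^ n).map (Int.castRingHom ℚ) =
        Polynomial.C ((x.den : ℚ) ^ n) * (Polynomial.X - Polynomial.C x) ^ n := by
      rw [Polynomial.map_pow, Polynomial.C_pow, ← mul_pow]
      congr 1
      have : Polynomial.C (x.num : ℚ) = Polynomial.C (x.den : ℚ) * Polynomial.C x := by
        rw [← Polynomial.C_mul, mul_comm, Rat.mul_den_eq_num]
      simp only [Polynomial.map_sub, Polynomial.map_mul, Polynomial.map_C, Polynomial.map_X,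
        Int.coe_castRingHom, Int.cast_natCast]
      rw [this]; ring
    rw [e]
    have hu : IsUnit (Polynomial.C ((x.den : ℚ) ^ n)) :=
      Polynomial.isUnit_C.mpr (IsUnit.mk0 _ (pow_ne_zero _ hden))
    rw [hu.mul_left_dvd]
    exact h1
  have h3 := (Polynomial.IsPrimitive.Int.dvd_iff_map_cast_dvd_map_cast _ _ (prim_lin x n)).mpr h2
  obtain ⟨g, hg⟩ := h3
  have hlead : (toP U).leadingCoeff = (x.den : ℤ) ^ n * g.leadingCoeff := by
    rw [hg, Polynomial.leadingCoeff_mul, Polynomial.leadingCoeff_pow]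
    congr 2
    rw [sub_eq_add_neg, ← Polynomial.C_neg]
    exact Polynomial.leadingCoeff_linear (by exact_mod_cast x.den_nz)
  have hne : toP U ≠ 0 := by
    intro h
    apply hU
    ext s
    rw [unit_eq_single s, ← toP_coeff, h]; simp
  have hlne : (toP U).leadingCoeff ≠ 0 := Polynomial.leadingCoeff_ne_zero.mpr hne
  have hglne : g.leadingCoeff ≠ 0 := by
    intro h; rw [h, mul_zero] at hlead; exact hlne hlead
  have h4 : ((x.den : ℤ)) ^ n ≤ |(toP U).leadingCoeff| := by
    rw [hlead, abs_mul, abs_of_nonneg (by positivity : (0:ℤ) ≤ (x.den : ℤ) ^ n)]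
    exact le_mul_of_one_le_right (by positivity) (Int.one_le_abs hglne)
  have h5 := abs_coeff_le_l1 U (Finsupp.single () (toP U).natDegree)
  rw [← toP_coeff, Polynomial.coeff_natDegree] at h5
  refine le_trans ?_ h5
  exact_mod_cast h4

end Univ
end RothThm

namespace RothThm
open MvPolynomial

section RothLemma

lemma sep_sum_det {σ υ : Type*} [Fintype σ] [Fintype υ] {k : ℕ}
    (φ : Fin k → MvPolynomial σ ℚ) (ψ : Fin k → MvPolynomial υ ℚ)
    (μ : Fin k → (σ →₀ ℕ)) (ν : Fin k → (υ →₀ ℕ)) :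
    (Matrix.of fun i j => hasse (Finsupp.sumElim (μ i) (ν j)) (∑ l, sep (φ l) (ψ l))).det =
      sep (Matrix.of fun i j => hasse (μ i) (φ j)).det
        (Matrix.of fun i j => hasse (ν i) (ψ j)).det := by
  have h1 : (Matrix.of fun i j => hasse (Finsupp.sumElim (μ i) (ν j)) (∑ l, sep (φ l) (ψ l))) =
      ((Matrix.of fun i j => hasse (μ i) (φ j)).map (rename Sum.inl : _ →ₐ[ℚ] MvPolynomial (σ ⊕ υ) ℚ)) *
      ((Matrix.of fun i j => hasse (ν i) (ψ j)).map
        (rename Sum.inr : _ →ₐ[ℚ] MvPolynomial (σ ⊕ υ) ℚ)).transpose := by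
    ext1 i j
    rw [Matrix.mul_apply, Matrix.of_apply, map_sum]
    refine Finset.sum_congr rfl fun l _ => ?_
    rw [hasse_sep]
    rfl
  rw [h1, Matrix.det_mul, Matrix.det_transpose]
  have e1 := AlgHom.map_det (rename Sum.inl : MvPolynomial σ ℚ →ₐ[ℚ] MvPolynomial (σ ⊕ υ) ℚ)
    (Matrix.of fun i j => hasse (μ i) (φ j))
  have e2 := AlgHom.map_det (rename Sum.inr : MvPolynomial υ ℚ →ₐ[ℚ] MvPolynomial (σ ⊕ υ) ℚ)
    (Matrix.of fun i j => hasse (ν i) (ψ j))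
  rw [sep, e1, e2]
  rfl

theorem structure_lemma {σ : Type*} [Fintype σ] (P : MvPolynomial (σ ⊕ Unit) ℤ) (hP : P ≠ 0)
    (r : σ ⊕ Unit → ℕ) (hdeg : DegBd r P) :
    ∃ (k : ℕ) (μ : Fin k → (σ →₀ ℕ)) (ν : Fin k → ℕ) (W : MvPolynomial (σ ⊕ Unit) ℤ)
      (V : MvPolynomial σ ℤ) (U : MvPolynomial Unit ℤ) (c : ℚ),
      0 < k ∧ k ≤ r (Sum.inr ()) + 1 ∧ (∀ i, ∑ h, μ i h < k) ∧ (∀ i, ν i < k) ∧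
      Function.Injective ν ∧
      W = (Matrix.of fun i j =>
        hasse (Finsupp.sumElim (μ i) (Finsupp.single () (ν j))) P).det ∧
      V ≠ 0 ∧ U ≠ 0 ∧ l1 V ≤ l1 W ∧ l1 U ≤ l1 W ∧ DegBd (fun h => k * r (Sum.inl h)) V ∧
      sep (map (Int.castRingHom ℚ) V) (map (Int.castRingHom ℚ) U) =
        c • map (Int.castRingHom ℚ) W := by
  classical
  have hinj : Function.Injective (Int.castRingHom ℚ) := Int.cast_injective
  have hPq : map (Int.castRingHom ℚ) P ≠ 0 := by
    intro h
    exact hP (MvPolynomial.map_injective _ hinj (by rw [h, map_zero]))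
  obtain ⟨k, φ, ψ, hk0, hk, hφ, hψ, hsum⟩ := rank_factor (map (Int.castRingHom ℚ) P) hPq
    (r (Sum.inr ())) (by
      intro s hs
      apply hdeg s
      intro h; apply hs; rw [coeff_map, h, map_zero])
  obtain ⟨μ, hμ, hμd⟩ := wronskian φ hφ
  obtain ⟨ν', hν, hνd⟩ := wronskian ψ hψ
  set V0 := (Matrix.of fun i j => hasse (μ i) (φ j)).det with hV0
  set U0 := (Matrix.of fun i j => hasse (ν' i) (ψ j)).det with hU0
  let ν : Fin k → ℕ := fun i => ν' i ()
  have hν' : ∀ i, ν' i = Finsupp.single () (ν i) := fun i => unit_eq_single _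
  have hνlt : ∀ i, ν i < k := by
    intro i
    have := hν i
    simpa using this
  have hνinj : Function.Injective ν := by
    intro i j hij
    by_contra hne
    apply hνd
    rw [hU0]
    apply Matrix.det_zero_of_row_eq hne
    ext1 l
    simp only [Matrix.of_apply]
    rw [hν' i, hν' j, hij]
  set W := (Matrix.of fun i j =>
        hasse (Finsupp.sumElim (μ i) (Finsupp.single () (ν j))) P).det with hW
  have hmapW : map (Int.castRingHom ℚ) W = sep V0 U0 := by
    rw [hW, RingHom.map_det, hV0, hU0, ← sep_sum_det, ← hsum]
    congr 1
    ext1 i j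
    simp only [RingHom.mapMatrix_apply, Matrix.map_apply, Matrix.of_apply]
    rw [hν' j, hasse_map]
  have hcoef : ∀ s t, ((coeff (Finsupp.sumElim s t) W : ℤ) : ℚ) = coeff s V0 * coeff t U0 := by
    intro s t
    rw [← coeff_sep, ← hmapW, coeff_map]; rfl
  obtain ⟨s0, hs0⟩ := MvPolynomial.ne_zero_iff.mp hμd
  obtain ⟨t0, ht0⟩ := MvPolynomial.ne_zero_iff.mp hνd
  have hVmap : map (Int.castRingHom ℚ) (slice t0 W) = coeff t0 U0 • V0 := by
    ext s
    rw [coeff_map, coeff_slice, coeff_smul, smul_eq_mul, mul_comm, ← hcoef]; rfl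
  have hUmap : map (Int.castRingHom ℚ) (slice s0 (rename Sum.swap W)) = coeff s0 V0 • U0 := by
    ext t
    rw [coeff_map, coeff_slice, coeff_swap, coeff_smul, smul_eq_mul, ← hcoef]; rfl
  refine ⟨k, μ, ν, W, slice t0 W, slice s0 (rename Sum.swap W), coeff t0 U0 * coeff s0 V0,
    hk0, hk, hμ, hνlt, hνinj, rfl, ?_, ?_, l1_slice_le _ _,
    (l1_slice_le _ _).trans (l1_swap_le _), ?_, ?_⟩
  · intro h
    rw [h, map_zero] at hVmap
    exact (smul_ne_zero ht0 hμd) hVmap.symm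
  · intro h
    rw [h, map_zero] at hUmap
    exact (smul_ne_zero hs0 hνd) hUmap.symm
  · intro s hs h
    rw [coeff_slice] at hs
    have := DegBd.det (r := r) _ (fun i j => by
      simp only [Matrix.of_apply]; exact hdeg.hasse _) _ hs (Sum.inl h)
    simpa using this
  · rw [hVmap, hUmap, hmapW]
    simp only [sep, map_smul, smul_mul_smul_comm]

lemma sum_lower {k ρ : ℕ} (ν : Fin k → ℕ) (hν : Function.Injective ν) (hlt : ∀ i, ν i < k)
    (hk : k ≤ ρ + 1) (hρ : 0 < ρ) (ε : ℝ) (hε : 0 < ε) (hε1 : ε ≤ 1) :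
    k * ε ^ 2 / 32 ≤ ∑ j, max 0 (ε / 2 - (ν j : ℝ) / ρ) := by
  classical
  have hρ' : (0 : ℝ) < ρ := by exact_mod_cast hρ
  have h1 : ∑ j, max 0 (ε / 2 - (ν j : ℝ) / ρ) =
      ∑ n ∈ Finset.range k, max 0 (ε / 2 - (n : ℝ) / ρ) := by
    have himg : Finset.univ.image ν = Finset.range k := by
      apply Finset.eq_of_subset_of_card_le
      · intro n hn
        obtain ⟨i, _, rfl⟩ := Finset.mem_image.mp hn
        exact Finset.mem_range.mpr (hlt i)
      · rw [Finset.card_image_of_injective _ hν]; simp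
    rw [← himg, Finset.sum_image (fun a _ b _ h => hν h)]
  rw [h1]
  set t := min k (⌊(ρ : ℝ) * ε / 4⌋₊ + 1) with ht
  have h2 : ∑ n ∈ Finset.range t, ε / 4 ≤ ∑ n ∈ Finset.range k, max 0 (ε / 2 - (n : ℝ) / ρ) := by
    refine le_trans (Finset.sum_le_sum (g := fun n : ℕ => max 0 (ε / 2 - (n : ℝ) / ρ)) ?_)
      (Finset.sum_le_sum_of_subset_of_nonneg
        (Finset.range_subset_range.mpr (min_le_left _ _)) fun _ _ _ => le_max_left _ _)
    intro n hn
    have hn1 : n < ⌊(ρ : ℝ) * ε / 4⌋₊ + 1 :=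
      lt_of_lt_of_le (Finset.mem_range.mp hn) (min_le_right _ _)
    have hn2 : (n : ℝ) ≤ (ρ : ℝ) * ε / 4 := by
      refine le_trans ?_ (Nat.floor_le (by positivity))
      exact_mod_cast Nat.lt_succ_iff.mp hn1
    have hn3 : (n : ℝ) / ρ ≤ ε / 4 := by
      rw [div_le_iff₀ hρ']; linarith
    exact le_trans (by linarith) (le_max_right _ _)
  refine le_trans ?_ h2
  rw [Finset.sum_const, Finset.card_range, nsmul_eq_mul]
  have h3 : (k : ℝ) * ε / 8 ≤ t := by
    rw [ht, Nat.cast_min]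
    apply le_min
    · have : (0 : ℝ) ≤ k := Nat.cast_nonneg _
      nlinarith
    · have hk2 : (k : ℝ) ≤ 2 * ρ := by
        have : k ≤ 2 * ρ := by omega
        exact_mod_cast this
      have := (Nat.lt_floor_add_one ((ρ : ℝ) * ε / 4)).le
      push_cast
      nlinarith
  nlinarith

/-- The statement of Roth's lemma for the set of variables `σ`. -/
def RL (σ : Type) [Fintype σ] (rank : σ → ℕ) : Prop :=
  ∀ ε : ℝ, 0 < ε → ∃ ω : ℝ, 0 < ω ∧ ∀ (r : σ → ℕ) (x : σ → ℚ) (L : ℝ) (P : MvPolynomial σ ℤ),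
    P ≠ 0 → (∀ h, 0 < r h) → (∀ h, L ≤ r h * Real.log (x h).den) → (∀ h, (r h : ℝ) ≤ ω * L) →
    (∀ i j, rank i < rank j → (r j : ℝ) ≤ ω * r i) → DegBd r P → l1 P ≤ Real.exp (ω * L) →
    ∃ s : σ →₀ ℕ, coeff s (shift x (map (Int.castRingHom ℚ) P)) ≠ 0 ∧
      ∑ h, (s h : ℝ) * (1 / r h : ℝ) ≤ ε

theorem RL_empty (rank : Empty → ℕ) : RL Empty rank := by
  intro ε hε
  refine ⟨1, one_pos, ?_⟩
  intro r x L P hP _ _ _ _ _ _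
  have hinj : Function.Injective (Int.castRingHom ℚ) := Int.cast_injective
  have : shift x (map (Int.castRingHom ℚ) P) ≠ 0 := by
    intro h
    have h1 : map (Int.castRingHom ℚ) P = 0 := shift_injective _ (by rw [h, map_zero])
    exact hP (MvPolynomial.map_injective _ hinj (by rw [h1, map_zero]))
  obtain ⟨s, hs⟩ := MvPolynomial.ne_zero_iff.mp this
  exact ⟨s, hs, by simpa using hε.le⟩

/-- Size of the Wronskian. -/
lemma wr_size {σ : Type*} [Fintype σ] (P : MvPolynomial (σ ⊕ Unit) ℤ)
    (r : σ ⊕ Unit → ℕ) (hdeg : DegBd r P) (k : ℕ) (hk0 : 0 < k) (hk : k ≤ r (Sum.inr ()) + 1)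
    (κ : Fin k → Fin k → (σ ⊕ Unit →₀ ℕ)) (A : ℝ) (hr : ∀ h, (r h : ℝ) ≤ A)
    (hl : l1 P ≤ Real.exp A) :
    l1 (Matrix.of fun i j => hasse (κ i j) P).det ≤
      Real.exp (k * ((Fintype.card σ + 3) * A)) := by
  have hA : 0 ≤ A := le_trans (Nat.cast_nonneg _) (hr (Sum.inr ()))
  have h1 := l1_det_le (Matrix.of fun i j => hasse (κ i j) P) (2 ^ (∑ h, r h) * l1 P)
    (mul_nonneg (by positivity) (l1_nonneg _)) (fun i j => l1_hasse_le P hdeg _)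
  refine h1.trans ?_
  have h2 : (2 : ℝ) ^ (∑ h, r h) ≤ Real.exp ((Fintype.card σ + 1) * A) := by
    have e2 : (2 : ℝ) ≤ Real.exp 1 := by
      have := Real.add_one_le_exp (1 : ℝ); linarith
    calc (2 : ℝ) ^ (∑ h, r h) ≤ (Real.exp 1) ^ (∑ h, r h) := by gcongr
      _ = Real.exp (∑ h, r h : ℕ) := by rw [← Real.exp_nat_mul, mul_one]
      _ ≤ _ := by
        apply Real.exp_le_exp.mpr
        push_cast
        refine (Finset.sum_le_card_nsmul _ _ A fun h _ => hr h).trans ?_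
        rw [Finset.card_univ, Fintype.card_sum, nsmul_eq_mul]
        simp
  have h3 : (k.factorial : ℝ) ≤ (Real.exp A) ^ k := by
    have : (k : ℝ) ≤ Real.exp A := by
      have a1 := Real.add_one_le_exp A
      have a2 : (k : ℝ) ≤ r (Sum.inr ()) + 1 := by exact_mod_cast hk
      linarith [hr (Sum.inr ())]
    refine le_trans ?_ (pow_le_pow_left₀ (Nat.cast_nonneg _) this k)
    exact_mod_cast Nat.factorial_le_pow k
  calc (k.factorial : ℝ) * (2 ^ (∑ h, r h) * l1 P) ^ k
      ≤ (Real.exp A) ^ k * (Real.exp ((Fintype.card σ + 1) * A) * Real.exp A) ^ k := by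
        have := l1_nonneg P
        gcongr
    _ = Real.exp (k * ((Fintype.card σ + 3) * A)) := by
        rw [← mul_pow, ← Real.exp_add, ← Real.exp_add, ← Real.exp_nat_mul]
        congr 1; ring

theorem RL_step (σ : Type) [Fintype σ] (rank : σ → ℕ) (m : ℕ) (hm : ∀ i, rank i < m)
    (hRL : RL σ rank) : RL (σ ⊕ Unit) (Sum.elim rank (fun _ => m)) := by
  classical
  intro ε₀ hε₀
  set ε := min ε₀ 1 with hεdef
  have hε : 0 < ε := lt_min hε₀ one_pos
  have hε1 : ε ≤ 1 := min_le_right _ _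
  set ε' := ε ^ 2 / 100 with hε'
  have hε'0 : 0 < ε' := by positivity
  obtain ⟨ω', hω', hRL'⟩ := hRL ε' hε'0
  set c0 : ℝ := ((Fintype.card σ : ℕ) : ℝ) with hc0
  have hc0' : 0 ≤ c0 := Nat.cast_nonneg _
  set ω := min ω' ε' / (c0 + 4) with hω
  have hmin : 0 < min ω' ε' := lt_min hω' hε'0
  have hωpos : 0 < ω := by positivity
  have hωmul : (c0 + 3) * ω ≤ min ω' ε' := by
    rw [hω, mul_div_assoc', div_le_iff₀ (by positivity)]
    nlinarith
  have hω1 : ω ≤ min ω' ε' := by nlinarith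
  have hωε : ω ≤ ε / 2 := by
    have : ω ≤ ε' := hω1.trans (min_le_right _ _)
    nlinarith
  refine ⟨ω, hωpos, ?_⟩
  intro r x L P hP hr0 hL hrL hrank hdeg hl1
  set ρ := r (Sum.inr ()) with hρ
  have hρ0 : 0 < ρ := hr0 _
  have hρ0' : (0 : ℝ) < ρ := by exact_mod_cast hρ0
  have hLpos : 0 < L := by
    have := hrL (Sum.inr ())
    have h2 : 0 < ω * L := lt_of_lt_of_le hρ0' this
    exact (pos_iff_pos_of_mul_pos h2).mp hωpos
  obtain ⟨k, μ, ν, W, V, U, c, hk0, hk, hμ, hνlt, hνinj, hW, hV0, hU0, hVl, hUl, hVdeg, hsep⟩ :=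
    structure_lemma P hP r hdeg
  have hk0' : (0 : ℝ) < k := by exact_mod_cast hk0
  have hWl : l1 W ≤ Real.exp (k * ((c0 + 3) * (ω * L))) := by
    rw [hW]
    exact wr_size P r hdeg k hk0 hk _ _ hrL hl1
  -- apply the induction hypothesis to `V`
  obtain ⟨s, hs, hsle⟩ := hRL' (fun h => k * r (Sum.inl h)) (x ∘ Sum.inl) (k * L) V hV0
    (fun h => Nat.mul_pos hk0 (hr0 _))
    (fun h => by
      push_cast
      rw [mul_assoc]
      exact mul_le_mul_of_nonneg_left (hL _) hk0'.le)
    (fun h => by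
      push_cast
      have h1 := hrL (Sum.inl h)
      have h2 : ω * L ≤ ω' * L :=
        mul_le_mul_of_nonneg_right (hω1.trans (min_le_left _ _)) hLpos.le
      nlinarith)
    (fun i j hij => by
      push_cast
      have h1 := hrank (Sum.inl i) (Sum.inl j) hij
      have h2 : ω * r (Sum.inl i) ≤ ω' * r (Sum.inl i) :=
        mul_le_mul_of_nonneg_right (hω1.trans (min_le_left _ _)) (Nat.cast_nonneg _)
      nlinarith)
    hVdeg
    (by
      refine hVl.trans (hWl.trans (Real.exp_le_exp.mpr ?_))
      have h2 : (c0 + 3) * ω * L ≤ ω' * L :=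
        mul_le_mul_of_nonneg_right (hωmul.trans (min_le_left _ _)) hLpos.le
      nlinarith)
  -- and the one variable result to `U`
  obtain ⟨n, hn, hnle⟩ := univ_index U hU0 (x (Sum.inr ()))
  have hlogpos : 0 < Real.log (x (Sum.inr ())).den := by
    have := hL (Sum.inr ())
    exact (pos_iff_pos_of_mul_pos (lt_of_lt_of_le hLpos this)).mp hρ0'
  have hnρ : (n : ℝ) ≤ k * ε' * ρ := by
    have h1 : ((x (Sum.inr ())).den : ℝ) ^ n ≤ Real.exp (k * ((c0 + 3) * (ω * L))) :=
      hnle.trans (hUl.trans hWl)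
    have hdpos : (0 : ℝ) < (x (Sum.inr ())).den := by exact_mod_cast (x (Sum.inr ())).den_pos
    have h2 : n * Real.log (x (Sum.inr ())).den ≤ k * ((c0 + 3) * (ω * L)) := by
      have := Real.log_le_log (by positivity) h1
      rwa [Real.log_pow, Real.log_exp] at this
    have h3 : (c0 + 3) * ω * L ≤ ε' * (ρ * Real.log (x (Sum.inr ())).den) := by
      refine mul_le_mul (hωmul.trans (min_le_right _ _)) (hL _) hLpos.le hε'0.le
    have h4 : n * Real.log (x (Sum.inr ())).den ≤
        (k * ε' * ρ) * Real.log (x (Sum.inr ())).den := by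
      nlinarith
    exact le_of_mul_le_mul_right h4 hlogpos
  -- the resulting nonvanishing coefficient of the translate of `W`
  have hcoefW : coeff (Finsupp.sumElim s (Finsupp.single () n))
      (shift x (map (Int.castRingHom ℚ) W)) ≠ 0 := by
    intro h0
    have h1 := congrArg (fun Q => coeff (Finsupp.sumElim s (Finsupp.single () n)) (shift x Q)) hsep
    simp only [shift_sep, coeff_sep, map_smul, coeff_smul, h0, smul_zero] at h1
    exact (mul_ne_zero hs hn) h1
  by_contra hcon
  push Not at hcon
  set w : σ ⊕ Unit → ℝ := fun h => (1 / r h : ℝ) with hw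
  have hw0 : ∀ h, 0 ≤ w h := fun h => by simp only [hw]; positivity
  have hPW : WGE w ε (shift x (map (Int.castRingHom ℚ) P)) := by
    intro u hu
    exact (min_le_left _ _).trans (hcon u hu).le
  have hsumμ : ∀ i j, ∑ h, ((Finsupp.sumElim (μ i) (Finsupp.single () (ν j)) h : ℕ) : ℝ) * w h ≤
      ω + (ν j : ℝ) / ρ := by
    intro i j
    rw [Fintype.sum_sum_type]
    apply add_le_add
    · simp only [Finsupp.sumElim_inl]
      have h1 : ∀ h ∈ (Finset.univ : Finset σ), (μ i h : ℝ) * w (Sum.inl h) ≤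
          (μ i h : ℝ) * (ω / ρ) := by
        intro h _
        apply mul_le_mul_of_nonneg_left _ (Nat.cast_nonneg _)
        have hrh : (0 : ℝ) < r (Sum.inl h) := by exact_mod_cast hr0 _
        have := hrank (Sum.inl h) (Sum.inr ()) (by simpa using hm h)
        simp only [hw]
        rw [div_le_div_iff₀ hrh hρ0']
        linarith
      refine (Finset.sum_le_sum h1).trans ?_
      rw [← Finset.sum_mul]
      have h2 : ((∑ h, μ i h : ℕ) : ℝ) ≤ ρ := by
        have := hμ i
        have : ∑ h, μ i h ≤ ρ := by omega
        exact_mod_cast this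
      push_cast at h2
      rw [mul_div_assoc', div_le_iff₀ hρ0']
      nlinarith
    · simp [hw, hρ, div_eq_mul_inv]
  have hWW : WGE w (∑ j, max 0 (ε / 2 - (ν j : ℝ) / ρ))
      (shift x (map (Int.castRingHom ℚ) W)) := by
    have e : shift x (map (Int.castRingHom ℚ) W) = (Matrix.of fun i j =>
        hasse (Finsupp.sumElim (μ i) (Finsupp.single () (ν j)))
          (shift x (map (Int.castRingHom ℚ) P))).det := by
      rw [hW, RingHom.map_det, AlgHom.map_det]
      congr 1
      ext1 i j
      simp only [RingHom.mapMatrix_apply, AlgHom.mapMatrix_apply, Matrix.map_apply,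
        Matrix.of_apply]
      rw [hasse_shift, hasse_map]
    rw [e]
    apply WGE.det
    intro i j
    rw [Matrix.of_apply]
    rcases le_total 0 (ε / 2 - (ν j : ℝ) / ρ) with h | h
    · rw [max_eq_right h]
      apply (hPW.hasse _).mono
      have := hsumμ i j
      linarith
    · rw [max_eq_left h]
      exact WGE.of_nonneg hw0 _
  have hfin := hWW _ hcoefW
  have hlow := sum_lower ν hνinj hνlt hk hρ0 ε hε hε1
  rw [Fintype.sum_sum_type] at hfin
  simp only [Finsupp.sumElim_inl, Finsupp.sumElim_inr] at hfin
  have hA : ∑ h, (s h : ℝ) * w (Sum.inl h) ≤ k * ε' := by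
    have : ∑ h, (s h : ℝ) * w (Sum.inl h) =
        k * ∑ h, (s h : ℝ) * (1 / ((k * r (Sum.inl h) : ℕ) : ℝ)) := by
      rw [Finset.mul_sum]
      refine Finset.sum_congr rfl fun h _ => ?_
      have hrh : (0 : ℝ) < r (Sum.inl h) := by exact_mod_cast hr0 _
      simp only [hw]
      push_cast
      field_simp
    rw [this]
    exact mul_le_mul_of_nonneg_left hsle hk0'.le
  have hB : ∑ h : Unit, ((Finsupp.single () n : Unit →₀ ℕ) h : ℝ) * w (Sum.inr h) ≤ k * ε' := by
    simp only [Finset.univ_unique, Finset.sum_singleton, hw]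
    have : (n : ℝ) * (1 / ρ) ≤ k * ε' := by
      rw [mul_one_div, div_le_iff₀ hρ0']; exact hnρ
    simpa using this
  have : k * ε ^ 2 / 32 ≤ k * ε' + k * ε' := by linarith
  have hpos : 0 < k * ε ^ 2 := by positivity
  rw [hε'] at this
  nlinarith

theorem roth_lemma (m : ℕ) : ∃ (σ : Type) (_ : Fintype σ) (rank : σ → ℕ),
    Fintype.card σ = m ∧ (∀ i, rank i < m) ∧ RL σ rank := by
  induction m with
  | zero => exact ⟨Empty, inferInstance, fun _ => 0, by simp, fun i => i.elim, RL_empty _⟩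
  | succ m ih =>
    obtain ⟨σ, _, rank, hcard, hrank, hRL⟩ := ih
    refine ⟨σ ⊕ Unit, inferInstance, Sum.elim rank (fun _ => m), by simp [hcard], ?_,
      RL_step σ rank m hrank hRL⟩
    rintro (i | i)
    · exact (hrank i).trans (Nat.lt_succ_self m)
    · exact Nat.lt_succ_self m

end RothLemma
end RothThm

namespace RothThm
open MvPolynomial

section IndexPoly

/-- Powers of an algebraic number, expressed with integer coordinates. -/
lemma power_coords (f : Polynomial ℤ) (ξ : ℝ) (hf : Polynomial.aeval ξ f = 0) (e : ℕ)
    (hd : f.natDegree = e + 1) :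
    ∃ A : ℝ, 1 ≤ A ∧ ∃ a : ℤ, a ≠ 0 ∧ ∀ N n : ℕ, n ≤ N → ∃ v : ℕ → ℤ,
      (∀ l, |(v l : ℝ)| ≤ A ^ N) ∧
      (a : ℝ) ^ N * ξ ^ n = ∑ l ∈ Finset.range (e + 1), (v l : ℝ) * ξ ^ l := by
  set a := f.leadingCoeff with ha
  have ha0 : a ≠ 0 := by
    rw [ha, Polynomial.leadingCoeff_ne_zero]
    rintro rfl
    simp at hd
  set H : ℝ := ∑ l ∈ Finset.range (e + 1), |(f.coeff l : ℝ)| with hH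
  have hH0 : 0 ≤ H := Finset.sum_nonneg fun _ _ => abs_nonneg _
  have ha1 : (1 : ℝ) ≤ |(a : ℝ)| := by
    have := Int.one_le_abs ha0
    exact_mod_cast this
  have hroot : (a : ℝ) * ξ ^ (e + 1) = -∑ l ∈ Finset.range (e + 1), (f.coeff l : ℝ) * ξ ^ l := by
    rw [Polynomial.aeval_eq_sum_range, hd, Finset.sum_range_succ] at hf
    have : f.coeff (e + 1) = a := by rw [ha, Polynomial.leadingCoeff, hd]
    rw [this] at hf
    simp only [zsmul_eq_mul] at hf
    linarith
  have hA1 : 1 ≤ |(a : ℝ)| + H := by linarith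
  refine ⟨|(a : ℝ)| + H, hA1, a, ha0, ?_⟩
  have key : ∀ n : ℕ, ∃ v : ℕ → ℤ, (∀ l, |(v l : ℝ)| ≤ (|(a : ℝ)| + H) ^ n) ∧
      (∀ l, e + 1 ≤ l → v l = 0) ∧
      (a : ℝ) ^ n * ξ ^ n = ∑ l ∈ Finset.range (e + 1), (v l : ℝ) * ξ ^ l := by
    intro n
    induction n with
    | zero =>
      refine ⟨fun l => if l = 0 then 1 else 0, ?_, ?_, ?_⟩
      · intro l; by_cases h : l = 0 <;> simp [h]
      · intro l hl; simp [show l ≠ 0 by omega]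
      · simp
    | succ n ih =>
      obtain ⟨v, hv, hv0, hvs⟩ := ih
      refine ⟨fun l => if e + 1 ≤ l then 0 else
        (if l = 0 then 0 else a * v (l - 1)) - v e * f.coeff l, ?_, ?_, ?_⟩
      · intro l
        by_cases hl : e + 1 ≤ l
        · simp only [hl, if_true, Int.cast_zero, abs_zero]; positivity
        · simp only [hl, if_false]
          have h1 : |(((if l = 0 then 0 else a * v (l - 1) : ℤ)) : ℝ)| ≤
              |(a : ℝ)| * (|(a : ℝ)| + H) ^ n := by
            by_cases h0 : l = 0
            · simp only [h0, if_true, Int.cast_zero, abs_zero]; positivity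
            · simp only [h0, if_false]; push_cast; rw [abs_mul]
              exact mul_le_mul_of_nonneg_left (hv _) (abs_nonneg _)
          have h2 : |((v e * f.coeff l : ℤ) : ℝ)| ≤ (|(a : ℝ)| + H) ^ n * H := by
            push_cast; rw [abs_mul]
            apply mul_le_mul (hv _) _ (abs_nonneg _) (by positivity)
            exact Finset.single_le_sum (f := fun l => |(f.coeff l : ℝ)|)
              (fun _ _ => abs_nonneg _) (Finset.mem_range.mpr (by omega))
          rw [Int.cast_sub]
          refine (abs_sub _ _).trans ?_
          rw [pow_succ]; linarith
      · intro l hl; simp [hl]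
      · have e1 : ∀ l ∈ Finset.range (e + 1), (((if e + 1 ≤ l then 0 else
            (if l = 0 then 0 else a * v (l - 1)) - v e * f.coeff l : ℤ)) : ℝ) * ξ ^ l =
            ((if l = 0 then 0 else a * v (l - 1) : ℤ) : ℝ) * ξ ^ l
              - v e * (f.coeff l * ξ ^ l) := by
          intro l hl
          rw [Finset.mem_range] at hl
          rw [if_neg (by omega)]
          rw [Int.cast_sub, Int.cast_mul]
          ring
        rw [Finset.sum_congr rfl e1, Finset.sum_sub_distrib, ← Finset.mul_sum,
          Finset.sum_range_succ']
        have e2 : ∀ l ∈ Finset.range e, ((if l + 1 = 0 then 0 else a * v (l + 1 - 1) : ℤ) : ℝ) *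
            ξ ^ (l + 1) = a * ξ * (v l * ξ ^ l) := by
          intro l _
          simp only [Nat.add_eq_zero_iff, one_ne_zero, and_false, if_false, Nat.add_sub_cancel]
          push_cast; ring
        rw [Finset.sum_congr rfl e2, ← Finset.mul_sum]
        rw [Finset.sum_range_succ] at hvs
        have e3 : (a : ℝ) ^ (n + 1) * ξ ^ (n + 1) = a * ξ * (a ^ n * ξ ^ n) := by ring
        rw [e3, hvs]
        have e4 : ∑ l ∈ Finset.range (e + 1), (f.coeff l : ℝ) * ξ ^ l = -(a * ξ ^ (e + 1)) := by
          linarith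
        rw [e4]
        simp
        ring
  intro N n hn
  obtain ⟨v, hv, _, hvs⟩ := key n
  refine ⟨fun l => a ^ (N - n) * v l, ?_, ?_⟩
  · intro l
    push_cast
    rw [abs_mul, abs_pow]
    calc |(a : ℝ)| ^ (N - n) * |(v l : ℝ)| ≤ (|(a : ℝ)| + H) ^ (N - n) * (|(a : ℝ)| + H) ^ n := by
          apply mul_le_mul _ (hv l) (abs_nonneg _) (by positivity)
          gcongr; linarith
      _ = _ := by rw [← pow_add, Nat.sub_add_cancel hn]
  · push_cast
    simp only [mul_assoc]
    rw [← Finset.mul_sum, ← hvs, ← mul_assoc, ← pow_add, Nat.sub_add_cancel hn]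

lemma one_var_moment (r : ℕ) (hr : 0 < r) (lam : ℝ) :
    ∑ i : Fin (r + 1), Real.exp (-lam * ((i : ℕ) / r - 1 / 2)) ≤
      (r + 1) * Real.exp (lam ^ 2 / 8) := by
  have hr' : (0 : ℝ) < r := by exact_mod_cast hr
  set S := ∑ i : Fin (r + 1), Real.exp (-lam * ((i : ℕ) / r - 1 / 2)) with hS
  have hS2 : S = ∑ i : Fin (r + 1), Real.exp (lam * ((i : ℕ) / r - 1 / 2)) := by
    rw [hS, ← Equiv.sum_comp Fin.revPerm]
    refine Finset.sum_congr rfl fun i _ => ?_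
    congr 1
    rw [Fin.revPerm_apply, Fin.val_rev]
    have : (i : ℕ) ≤ r := by omega
    rw [show r + 1 - ((i : ℕ) + 1) = r - i by omega, Nat.cast_sub this]
    field_simp
    ring
  have h2 : S + S ≤ ∑ i : Fin (r + 1), 2 * Real.exp (lam ^ 2 / 8) := by
    nth_rewrite 2 [hS2]
    rw [hS, ← Finset.sum_add_distrib]
    refine Finset.sum_le_sum fun i _ => ?_
    have hc := Real.cosh_le_exp_half_sq (lam * ((i : ℕ) / r - 1 / 2))
    have hx : ((i : ℕ) / r - 1 / 2 : ℝ) ^ 2 ≤ 1 / 4 := by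
      have hi : ((i : ℕ) : ℝ) ≤ r := by
        have : (i : ℕ) ≤ r := by omega
        exact_mod_cast this
      have h0 : (0 : ℝ) ≤ (i : ℕ) / r := by positivity
      have h1 : ((i : ℕ) / r : ℝ) ≤ 1 := by rw [div_le_one hr']; exact hi
      nlinarith
    have hc2 : Real.exp ((lam * ((i : ℕ) / r - 1 / 2)) ^ 2 / 2) ≤ Real.exp (lam ^ 2 / 8) := by
      apply Real.exp_le_exp.mpr
      rw [mul_pow]
      nlinarith [sq_nonneg lam]
    rw [Real.cosh_eq] at hc
    rw [neg_mul]
    linarith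
  simp at h2
  linarith

/-- The number of multi-indices with small weight. -/
lemma count_bad {σ : Type} [Fintype σ] [DecidableEq σ] (r : σ → ℕ) (hr : ∀ h, 0 < r h) (ε : ℝ)
    (hε : 0 < ε) :
    (((Finset.univ : Finset ((h : σ) → Fin (r h + 1))).filter fun i =>
      ∑ h, ((i h : ℕ) : ℝ) * (1 / r h : ℝ) < (1 / 2 - ε) * Fintype.card σ).card : ℝ) ≤
      (∏ h, (r h + 1 : ℝ)) * Real.exp (-2 * ε ^ 2 * Fintype.card σ) := by
  set bad := (Finset.univ : Finset ((h : σ) → Fin (r h + 1))).filter fun i =>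
      ∑ h, ((i h : ℕ) : ℝ) * (1 / r h : ℝ) < (1 / 2 - ε) * Fintype.card σ with hbad
  set m : ℝ := ((Fintype.card σ : ℕ) : ℝ) with hm
  have h1 : bad.card * Real.exp (4 * ε * (ε * m)) ≤
      ∑ i : (h : σ) → Fin (r h + 1), ∏ h, Real.exp (-(4 * ε) * ((i h : ℕ) / r h - 1 / 2)) := by
    rw [← nsmul_eq_mul]
    refine (Finset.card_nsmul_le_sum bad _ _ ?_).trans
      (Finset.sum_le_sum_of_subset_of_nonneg (Finset.filter_subset _ _) fun i _ _ =>
        Finset.prod_nonneg fun _ _ => (Real.exp_pos _).le)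
    intro i hi
    rw [hbad, Finset.mem_filter] at hi
    rw [← Real.exp_sum]
    apply Real.exp_le_exp.mpr
    rw [← Finset.mul_sum, Finset.sum_sub_distrib]
    have e : ∑ h, ((i h : ℕ) / r h : ℝ) = ∑ h, ((i h : ℕ) : ℝ) * (1 / r h : ℝ) :=
      Finset.sum_congr rfl fun h _ => by ring
    rw [e]
    have e2 : ∑ h : σ, (1 / 2 : ℝ) = m / 2 := by simp [hm]; ring
    rw [e2]
    have := hi.2
    nlinarith
  have h2 : ∑ i : (h : σ) → Fin (r h + 1), ∏ h, Real.exp (-(4 * ε) * ((i h : ℕ) / r h - 1 / 2)) ≤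
      (∏ h, (r h + 1 : ℝ)) * Real.exp (2 * ε ^ 2 * m) := by
    have e := (Finset.prod_univ_sum (fun h : σ => (Finset.univ : Finset (Fin (r h + 1))))
      (fun h i => Real.exp (-(4 * ε) * ((i : ℕ) / r h - 1 / 2)))).symm
    rw [Fintype.piFinset_univ] at e
    rw [e]
    calc _ ≤ ∏ h, ((r h + 1 : ℝ) * Real.exp ((4 * ε) ^ 2 / 8)) :=
          Finset.prod_le_prod (fun h _ => Finset.sum_nonneg fun _ _ => (Real.exp_pos _).le)
            fun h _ => one_var_moment _ (hr h) _
      _ = _ := by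
        rw [Finset.prod_mul_distrib, Finset.prod_const, Finset.card_univ, ← Real.exp_nat_mul]
        congr 2
        rw [hm]; ring
  have h3 := h1.trans h2
  rw [← le_div_iff₀ (Real.exp_pos _), mul_div_assoc, ← Real.exp_sub] at h3
  rw [show -2 * ε ^ 2 * m = 2 * ε ^ 2 * m - 4 * ε * (ε * m) by ring]
  exact h3

end IndexPoly
end RothThm

namespace RothThm
open MvPolynomial

section IndexPoly

/-- A bounded multi-index as a finitely supported function. -/
noncomputable def toF {σ : Type} [Fintype σ] {r : σ → ℕ} (b : (h : σ) → Fin (r h + 1)) : σ →₀ ℕ :=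
  Finsupp.equivFunOnFinite.symm fun h => (b h : ℕ)

@[simp] lemma toF_apply {σ : Type} [Fintype σ] {r : σ → ℕ} (b : (h : σ) → Fin (r h + 1)) (h : σ) :
    toF b h = (b h : ℕ) := rfl

lemma toF_injective {σ : Type} [Fintype σ] {r : σ → ℕ} :
    Function.Injective (toF : ((h : σ) → Fin (r h + 1)) → (σ →₀ ℕ)) := by
  intro b c hbc
  funext h
  apply Fin.ext
  have := DFunLike.congr_fun hbc h
  simpa using this

lemma coeff_shift_const {σ : Type} [Fintype σ] (ξ : ℝ) {r : σ → ℕ}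
    (t : ((h : σ) → Fin (r h + 1)) → ℤ) (s : σ →₀ ℕ) [DecidableEq σ] :
    coeff s (shift (fun _ => ξ) (map (Int.castRingHom ℝ) (∑ b, monomial (toF b) (t b)))) =
      ∑ b, (t b : ℝ) * (mchoose (toF b) s * ξ ^ (∑ h, (b h - s h : ℕ))) := by
  rw [coeff_shift, map_sum, map_sum, map_sum]
  refine Finset.sum_congr rfl fun b _ => ?_
  rw [map_monomial, hasse_monomial, eval_monomial, Finsupp.prod_fintype _ _ (by simp),
    Finset.prod_pow_eq_pow_sum]
  simp [mul_assoc]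

attribute [local instance] Matrix.seminormedAddCommGroup in
/-- Siegel's lemma in the form used below. -/
lemma siegel {α β : Type} [Fintype α] [Fintype β] (A : Matrix α β ℤ)
    (hm : 0 < Fintype.card α) (hn : 2 * Fintype.card α ≤ Fintype.card β) (M : ℝ) (hM1 : 1 ≤ M)
    (hM : ∀ i j, |(A i j : ℝ)| ≤ M) :
    ∃ t : β → ℤ, t ≠ 0 ∧ (∀ i, ∑ j, A i j * t j = 0) ∧
      ∀ j, |(t j : ℝ)| ≤ Fintype.card β * M := by
  obtain ⟨t, ht, h0, hb⟩ := Int.Matrix.exists_ne_zero_int_vec_norm_le A (by omega) hm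
  refine ⟨t, ht, fun i => congrFun h0 i, fun j => ?_⟩
  have hA : ‖A‖ ≤ M := by
    rw [Matrix.norm_le_iff (by linarith)]
    intro i j
    rw [Int.norm_eq_abs]; exact hM i j
  have h1 : |(t j : ℝ)| ≤ ‖t‖ := by
    rw [← Int.norm_eq_abs]; exact norm_le_pi_norm t j
  have hβ : (1 : ℝ) ≤ Fintype.card β := by
    have : 1 ≤ Fintype.card β := by omega
    exact_mod_cast this
  have hmx : max 1 ‖A‖ ≤ M := max_le hM1 hA
  have hn' : 2 * (Fintype.card α : ℝ) ≤ Fintype.card β := by exact_mod_cast hn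
  have hm' : (0 : ℝ) < Fintype.card α := by exact_mod_cast hm
  refine h1.trans (hb.trans ?_)
  have hbase : (1 : ℝ) ≤ Fintype.card β * max 1 ‖A‖ :=
    one_le_mul_of_one_le_of_one_le hβ (le_max_left _ _)
  calc _ ≤ (Fintype.card β * max 1 ‖A‖) ^ (1 : ℝ) := by
        apply Real.rpow_le_rpow_of_exponent_le hbase
        rw [div_le_one (by linarith)]
        linarith
    _ = Fintype.card β * max 1 ‖A‖ := Real.rpow_one _
    _ ≤ _ := by gcongr

theorem index_poly (f : Polynomial ℤ) (ξ : ℝ) (hf : Polynomial.aeval ξ f = 0) (e : ℕ)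
    (hd : f.natDegree = e + 1) :
    ∃ B : ℝ, 1 ≤ B ∧ ∀ (σ : Type) [Fintype σ] (r : σ → ℕ) (ε : ℝ), 0 < Fintype.card σ →
      (∀ h, 0 < r h) → 0 < ε → ε < 1 / 2 →
      (e + 1) * Real.exp (-2 * ε ^ 2 * Fintype.card σ) ≤ 1 / 2 →
      ∃ P : MvPolynomial σ ℤ, P ≠ 0 ∧ DegBd r P ∧ l1 P ≤ B ^ (∑ h, r h) ∧
        WGE (fun h => (1 / r h : ℝ)) ((1 / 2 - ε) * Fintype.card σ)
          (shift (fun _ => ξ) (map (Int.castRingHom ℝ) P)) := by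
  classical
  obtain ⟨A, hA, a, ha, hcoord⟩ := power_coords f ξ hf e hd
  choose! v hv hvs using hcoord
  refine ⟨8 * A, by linarith, ?_⟩
  intro σ _ r ε hcard hr hε hε2 hexp
  set R := ∑ h, r h with hR
  set β := (h : σ) → Fin (r h + 1) with hβ
  set bad := (Finset.univ : Finset β).filter fun i =>
      ∑ h, ((i h : ℕ) : ℝ) * (1 / r h : ℝ) < (1 / 2 - ε) * Fintype.card σ with hbad
  have hcb : (Fintype.card β : ℝ) = ∏ h, (r h + 1 : ℝ) := by
    rw [Fintype.card_pi]; push_cast; simp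
  have hcb2 : (Fintype.card β : ℝ) ≤ 2 ^ R := by
    rw [hcb, hR, ← Finset.prod_pow_eq_pow_sum]
    refine Finset.prod_le_prod (fun h _ => by positivity) fun h _ => ?_
    have : r h + 1 ≤ 2 ^ r h := Nat.lt_two_pow_self
    exact_mod_cast this
  have hcount : (bad.card : ℝ) ≤ (∏ h, (r h + 1 : ℝ)) *
      Real.exp (-2 * ε ^ 2 * Fintype.card σ) := count_bad r hr ε hε
  have hzero : (fun h => 0 : β) ∈ bad := by
    rw [hbad, Finset.mem_filter]
    refine ⟨Finset.mem_univ _, ?_⟩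
    simp only [Fin.val_zero, Nat.cast_zero, zero_mul, Finset.sum_const_zero]
    have : (0 : ℝ) < Fintype.card σ := by exact_mod_cast hcard
    apply mul_pos _ this
    linarith
  have hα1 : 0 < Fintype.card (bad × Fin (e + 1)) := by
    have : Nonempty bad := ⟨⟨_, hzero⟩⟩
    exact Fintype.card_pos
  have hα2 : 2 * Fintype.card (bad × Fin (e + 1)) ≤ Fintype.card β := by
    rw [Fintype.card_prod, Fintype.card_fin, Fintype.card_coe]
    have : (2 : ℝ) * (bad.card * (e + 1)) ≤ Fintype.card β := by
      rw [hcb]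
      have h0 : (0 : ℝ) ≤ ∏ h, (r h + 1 : ℝ) := Finset.prod_nonneg fun h _ => by positivity
      have he : (0 : ℝ) ≤ e + 1 := by positivity
      have h1 := mul_le_mul_of_nonneg_right hcount he
      have h2 := mul_le_mul_of_nonneg_left hexp h0
      linarith
    exact_mod_cast this
  have hle : ∀ (b : β) (i : β), ∑ h, ((b h : ℕ) - (i h : ℕ)) ≤ R := fun b i =>
    Finset.sum_le_sum fun h _ => by have := (b h).2; omega
  have hmc : ∀ (b : β) (i : β), (mchoose (toF b) (toF i) : ℝ) ≤ 2 ^ R := by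
    intro b i
    have h1 := mchoose_le (toF b) (toF i)
    have h2 : ∑ h, toF b h ≤ R := Finset.sum_le_sum fun h _ => by
      have := (b h).2; rw [toF_apply]; omega
    have : mchoose (toF b) (toF i) ≤ 2 ^ R := h1.trans (Nat.pow_le_pow_right (by norm_num) h2)
    exact_mod_cast this
  obtain ⟨t, ht0, hteq, htb⟩ := siegel (Matrix.of fun (p : bad × Fin (e + 1)) (b : β) =>
      (mchoose (toF b) (toF p.1.1) : ℤ) * v R (∑ h, ((b h : ℕ) - (p.1.1 h : ℕ))) (p.2 : ℕ))
    hα1 hα2 ((2 * A) ^ R) (one_le_pow₀ (by linarith)) (by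
      intro p b
      rw [Matrix.of_apply, mul_pow]
      push_cast
      rw [abs_mul, Nat.abs_cast]
      exact mul_le_mul (hmc _ _) (hv _ _ (hle _ _) _) (abs_nonneg _) (by positivity))
  have hcoeff : ∀ s : σ →₀ ℕ, coeff s (∑ b : β, monomial (toF b) (t b)) =
      ∑ b : β, if toF b = s then t b else 0 := by
    intro s; rw [coeff_sum]; simp [coeff_monomial]
  refine ⟨∑ b : β, monomial (toF b) (t b), ?_, ?_, ?_, ?_⟩
  · intro h
    apply ht0
    funext b
    have := hcoeff (toF b)
    rw [h, coeff_zero, Finset.sum_eq_single b] at this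
    · simpa using this.symm
    · intro c _ hc
      rw [if_neg fun h => hc (toF_injective h)]
    · simp
  · intro s hs h
    rw [hcoeff] at hs
    obtain ⟨b, _, hb⟩ := Finset.exists_ne_zero_of_sum_ne_zero hs
    have : toF b = s := by
      by_contra h; exact hb (if_neg h)
    rw [← this, toF_apply]
    have := (b h).2; omega
  · refine (l1_sum_le _ _).trans ?_
    have : ∀ b ∈ (Finset.univ : Finset β), l1 (monomial (toF b) (t b)) ≤
        2 ^ R * (2 * A) ^ R := by
      intro b _
      refine (l1_monomial_le _ _).trans ((htb b).trans ?_)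
      gcongr
    refine (Finset.sum_le_card_nsmul _ _ _ this).trans ?_
    rw [Finset.card_univ, nsmul_eq_mul]
    calc _ ≤ (2 : ℝ) ^ R * (2 ^ R * (2 * A) ^ R) := by gcongr
      _ = (8 * A) ^ R := by rw [← mul_pow, ← mul_pow]; congr 1; ring
  · intro s hs
    by_contra hlt
    push Not at hlt
    apply hs
    rw [coeff_shift_const]
    by_cases hsr : ∀ h, s h ≤ r h
    · set i : β := fun h => ⟨s h, Nat.lt_succ_of_le (hsr h)⟩ with hi
      have hsi : toF i = s := by ext h; rfl
      have hib : i ∈ bad := by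
        rw [hbad, Finset.mem_filter]
        exact ⟨Finset.mem_univ _, hlt⟩
      have haR : (a : ℝ) ^ R ≠ 0 := pow_ne_zero _ (by exact_mod_cast ha)
      apply (mul_eq_zero.mp (?_ : (a : ℝ) ^ R * _ = 0)).resolve_left haR
      rw [Finset.mul_sum]
      have e1 : ∀ b ∈ (Finset.univ : Finset β), (a : ℝ) ^ R * ((t b : ℝ) *
          (mchoose (toF b) s * ξ ^ (∑ h, ((b h : ℕ) - s h)))) =
          ∑ l ∈ Finset.range (e + 1), (((mchoose (toF b) s : ℤ) *
            v R (∑ h, ((b h : ℕ) - s h)) l * t b : ℤ) : ℝ) * ξ ^ l := by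
        intro b _
        have := hvs R (∑ h, ((b h : ℕ) - s h)) (hle b i)
        calc _ = (t b : ℝ) * mchoose (toF b) s * ((a : ℝ) ^ R * ξ ^ (∑ h, ((b h : ℕ) - s h))) := by
              ring
          _ = _ := by
            rw [this, Finset.mul_sum]
            refine Finset.sum_congr rfl fun l _ => ?_
            push_cast; ring
      rw [Finset.sum_congr rfl e1, Finset.sum_comm]
      refine Finset.sum_eq_zero fun l hl => ?_
      rw [← Finset.sum_mul, ← Int.cast_sum]
      have := hteq (⟨i, hib⟩, ⟨l, Finset.mem_range.mp hl⟩)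
      simp only [Matrix.of_apply, hsi] at this
      rw [show (∑ b : β, (mchoose (toF b) s : ℤ) *
            v R (∑ h, ((b h : ℕ) - s h)) l * t b : ℤ) = 0 from this]
      simp
    · refine Finset.sum_eq_zero fun b _ => ?_
      rw [mchoose_eq_zero]
      · simp
      · intro hle'
        apply hsr
        intro h
        have h1 := hle' h
        have := (b h).2
        rw [toF_apply] at h1
        omega

end IndexPoly
end RothThm

namespace RothThm
open MvPolynomial

section Bounds

lemma lower_bound {σ : Type} [Fintype σ] (Q : MvPolynomial σ ℤ) (r : σ → ℕ) (hQ : DegBd r Q)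
    (x : σ → ℚ) (h0 : eval x (map (Int.castRingHom ℚ) Q) ≠ 0) :
    1 ≤ |((eval x (map (Int.castRingHom ℚ) Q) : ℚ) : ℝ)| * ∏ h, ((x h).den : ℝ) ^ r h := by
  have hint : eval x (map (Int.castRingHom ℚ) Q) * ∏ h, ((x h).den : ℚ) ^ r h =
      ((∑ s ∈ Q.support, coeff s Q * ∏ h, ((x h).num ^ s h * (x h).den ^ (r h - s h)) : ℤ) : ℚ) := by
    rw [eval_map, eval₂_eq', Finset.sum_mul]
    push_cast
    refine Finset.sum_congr rfl fun s hs => ?_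
    rw [mul_assoc, ← Finset.prod_mul_distrib]
    simp only [eq_intCast]
    congr 1
    refine Finset.prod_congr rfl fun h _ => ?_
    have hle := hQ s (mem_support_iff.mp hs) h
    have hden : ((x h).den : ℚ) ≠ 0 := by exact_mod_cast (x h).den_nz
    have hx : x h * (x h).den = (x h).num := Rat.mul_den_eq_num _
    rw [← hx, mul_pow, mul_assoc, ← pow_add, Nat.add_sub_cancel' hle]
  set z : ℤ := ∑ s ∈ Q.support, coeff s Q * ∏ h, ((x h).num ^ s h * (x h).den ^ (r h - s h))
  have hprod : (∏ h, ((x h).den : ℚ) ^ r h) ≠ 0 :=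
    Finset.prod_ne_zero_iff.mpr fun h _ => pow_ne_zero _ (by exact_mod_cast (x h).den_nz)
  have hz : z ≠ 0 := by
    intro hz
    rw [hz, Int.cast_zero] at hint
    exact (mul_ne_zero h0 hprod) hint
  have h1 : (1 : ℝ) ≤ |(z : ℝ)| := by exact_mod_cast Int.one_le_abs hz
  have h2 : ((eval x (map (Int.castRingHom ℚ) Q) : ℚ) : ℝ) * ∏ h, ((x h).den : ℝ) ^ r h = z := by
    have := congrArg (fun q : ℚ => (q : ℝ)) hint
    push_cast at this
    exact_mod_cast this
  rw [← h2, abs_mul] at h1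
  rwa [abs_of_nonneg (a := ∏ h, ((x h).den : ℝ) ^ r h)
    (Finset.prod_nonneg fun h _ => by positivity)] at h1

lemma coeff_shift_map {σ : Type} [Fintype σ] (P : MvPolynomial σ ℤ) (a : σ → ℝ) (s : σ →₀ ℕ) :
    coeff s (shift a (map (Int.castRingHom ℝ) P)) =
      ∑ b ∈ P.support, ((coeff b P : ℤ) : ℝ) * (mchoose b s * ∏ h, a h ^ (b h - s h)) := by
  rw [coeff_shift]
  conv_lhs => rw [P.as_sum]
  rw [map_sum, map_sum, map_sum]
  refine Finset.sum_congr rfl fun b _ => ?_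
  rw [map_monomial, hasse_monomial, eval_monomial, Finsupp.prod_fintype _ _ (by simp)]
  simp [mul_assoc]

lemma degBd_shift {σ : Type} [Fintype σ] (P : MvPolynomial σ ℤ) (r : σ → ℕ) (hP : DegBd r P)
    (a : σ → ℝ) : DegBd r (shift a (map (Int.castRingHom ℝ) P)) := by
  intro s hs h
  rw [coeff_shift_map] at hs
  obtain ⟨b, hb, hne⟩ := Finset.exists_ne_zero_of_sum_ne_zero hs
  have h1 : s ≤ b := by
    by_contra hcon
    rw [mchoose_eq_zero hcon] at hne
    simp at hne
  exact (h1 h).trans (hP b (mem_support_iff.mp hb) h)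

lemma abs_coeff_shift_le {σ : Type} [Fintype σ] (P : MvPolynomial σ ℤ) (r : σ → ℕ)
    (hP : DegBd r P) (ξ : ℝ) (s : σ →₀ ℕ) :
    |coeff s (shift (fun _ => ξ) (map (Int.castRingHom ℝ) P))| ≤
      l1 P * (2 * max 1 |ξ|) ^ (∑ h, r h) := by
  rw [coeff_shift_map, l1, Finset.sum_mul]
  refine (Finset.abs_sum_le_sum_abs _ _).trans (Finset.sum_le_sum fun b hb => ?_)
  rw [abs_mul]
  apply mul_le_mul_of_nonneg_left _ (abs_nonneg _)
  have hb' := hP b (mem_support_iff.mp hb)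
  have hX : 1 ≤ max 1 |ξ| := le_max_left _ _
  rw [abs_mul, Nat.abs_cast, mul_pow]
  apply mul_le_mul _ _ (abs_nonneg _) (by positivity)
  · have h1 := mchoose_le b s
    have h2 : ∑ h, b h ≤ ∑ h, r h := Finset.sum_le_sum fun h _ => hb' h
    have : mchoose b s ≤ 2 ^ ∑ h, r h := h1.trans (Nat.pow_le_pow_right (by norm_num) h2)
    exact_mod_cast this
  · rw [Finset.prod_pow_eq_pow_sum, abs_pow]
    have h2 : ∑ h, (b h - s h) ≤ ∑ h, r h :=
      Finset.sum_le_sum fun h _ => (Nat.sub_le _ _).trans (hb' h)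
    calc |ξ| ^ (∑ h, (b h - s h)) ≤ (max 1 |ξ|) ^ (∑ h, (b h - s h)) := by
          gcongr; exact le_max_right _ _
      _ ≤ _ := pow_le_pow_right₀ hX h2

lemma card_support_le {σ : Type} [Fintype σ] {R : Type*} [CommRing R] (Q : MvPolynomial σ R)
    (r : σ → ℕ) (hQ : DegBd r Q) : (Q.support.card : ℝ) ≤ 2 ^ (∑ h, r h) := by
  classical
  have h1 : Q.support ⊆ (Finset.univ : Finset ((h : σ) → Fin (r h + 1))).image toF := by
    intro s hs
    rw [Finset.mem_image]
    refine ⟨fun h => ⟨s h, Nat.lt_succ_of_le (hQ s (mem_support_iff.mp hs) h)⟩,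
      Finset.mem_univ _, ?_⟩
    ext h; rfl
  have h2 : Q.support.card ≤ ∏ h, (r h + 1) := by
    refine (Finset.card_le_card h1).trans (Finset.card_image_le.trans ?_)
    rw [Finset.card_univ, Fintype.card_pi]
    simp
  have h3 : ∏ h, (r h + 1) ≤ 2 ^ (∑ h, r h) := by
    rw [← Finset.prod_pow_eq_pow_sum]
    exact Finset.prod_le_prod' fun h _ => Nat.lt_two_pow_self
  exact_mod_cast h2.trans h3

lemma upper_bound {σ : Type} [Fintype σ] (P : MvPolynomial σ ℤ) (r : σ → ℕ) (hr : ∀ h, 0 < r h)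
    (hP : DegBd r P) (ξ c : ℝ)
    (hW : WGE (fun h => (1 / r h : ℝ)) c (shift (fun _ => ξ) (map (Int.castRingHom ℝ) P)))
    (x lq : σ → ℝ) (τ L : ℝ) (hτ : 0 ≤ τ) (hx : ∀ h, |x h - ξ| ≤ Real.exp (-τ * lq h))
    (hL : ∀ h, L ≤ r h * lq h) (s : σ →₀ ℕ) (hL0 : 0 ≤ L) :
    |coeff s (shift x (map (Int.castRingHom ℝ) P))| ≤
      (8 * max 1 |ξ|) ^ (∑ h, r h) * l1 P *
        Real.exp (-τ * L * (c - ∑ h, (s h : ℝ) * (1 / r h : ℝ))) := by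
  set R := ∑ h, r h with hR
  set G := shift (fun _ => ξ) (map (Int.castRingHom ℝ) P) with hG
  set κ := c - ∑ h, (s h : ℝ) * (1 / r h : ℝ) with hκ
  have hX : 1 ≤ max 1 |ξ| := le_max_left _ _
  have e1 : shift x (map (Int.castRingHom ℝ) P) = shift (fun h => x h - ξ) G := by
    rw [hG, shift_shift]
    congr 2
    funext h; simp
  have hGd : DegBd r G := degBd_shift P r hP _
  rw [e1, coeff_shift, eval_eq']
  refine (Finset.abs_sum_le_sum_abs _ _).trans ?_
  have hterm : ∀ u ∈ (hasse s G).support,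
      |coeff u (hasse s G) * ∏ h, (x h - ξ) ^ u h| ≤
        (l1 P * (2 * max 1 |ξ|) ^ R * 2 ^ R) * Real.exp (-τ * L * κ) := by
    intro u hu
    have hu0 := mem_support_iff.mp hu
    have hwt := (hW.hasse s) u hu0
    rw [coeff_hasse] at hu0 ⊢
    have hus := hGd _ (left_ne_zero_of_mul hu0)
    rw [abs_mul]
    have hl := l1_nonneg P
    apply mul_le_mul _ _ (abs_nonneg _) (by positivity)
    · rw [abs_mul, Nat.abs_cast]
      apply mul_le_mul (abs_coeff_shift_le P r hP ξ _) _ (Nat.cast_nonneg _) (by positivity)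
      have h1 := mchoose_le (u + s) s
      have h2 : ∑ h, (u + s) h ≤ R := Finset.sum_le_sum fun h _ => hus h
      have : mchoose (u + s) s ≤ 2 ^ R := h1.trans (Nat.pow_le_pow_right (by norm_num) h2)
      exact_mod_cast this
    · rw [Finset.abs_prod]
      calc ∏ h, |(x h - ξ) ^ u h| ≤ ∏ h, Real.exp (-τ * (L * ((u h : ℝ) * (1 / r h : ℝ)))) := by
            refine Finset.prod_le_prod (fun h _ => abs_nonneg _) fun h _ => ?_
            rw [abs_pow]
            refine (pow_le_pow_left₀ (abs_nonneg _) (hx h) _).trans ?_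
            rw [← Real.exp_nat_mul]
            apply Real.exp_le_exp.mpr
            have hrh : (0 : ℝ) < r h := by exact_mod_cast hr h
            have h1 : L * ((u h : ℝ) * (1 / r h : ℝ)) ≤ u h * lq h := by
              rw [mul_one_div, mul_div_assoc', div_le_iff₀ hrh]
              have := mul_le_mul_of_nonneg_left (hL h) (Nat.cast_nonneg (α := ℝ) (u h))
              linarith
            have h2 := mul_le_mul_of_nonneg_left h1 hτ
            linarith
        _ = Real.exp (-τ * L * ∑ h, ((u h : ℝ) * (1 / r h : ℝ))) := by
            rw [← Real.exp_sum, Finset.mul_sum]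
            congr 1
            refine Finset.sum_congr rfl fun h _ => by ring
        _ ≤ _ := by
            apply Real.exp_le_exp.mpr
            have h3 := mul_le_mul_of_nonneg_left hwt (mul_nonneg hτ hL0)
            simp only [neg_mul]
            exact neg_le_neg h3
  refine (Finset.sum_le_card_nsmul _ _ _ hterm).trans ?_
  rw [nsmul_eq_mul]
  have hc := card_support_le (hasse s G) r (hGd.hasse s)
  have hl := l1_nonneg P
  calc _ ≤ (2 : ℝ) ^ R * ((l1 P * (2 * max 1 |ξ|) ^ R * 2 ^ R) * Real.exp (-τ * L * κ)) := by
        gcongr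
    _ = (2 ^ R * (2 * max 1 |ξ|) ^ R * 2 ^ R) * l1 P * Real.exp (-τ * L * κ) := by ring
    _ = _ := by rw [← mul_pow, ← mul_pow]; congr 3; ring

end Bounds
end RothThm

namespace RothThm
open MvPolynomial

section Main

lemma cast_eval {σ : Type} [Fintype σ] (Q : MvPolynomial σ ℤ) (x : σ → ℚ) :
    ((eval x (map (Int.castRingHom ℚ) Q) : ℚ) : ℝ) =
      eval (fun h => (x h : ℝ)) (map (Int.castRingHom ℝ) Q) := by
  rw [eval_map, eval_map, eval₂_eq', eval₂_eq']
  push_cast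
  simp

set_option maxHeartbeats 1000000 in
/-- **Roth's theorem**, for rationals of large denominator. -/
theorem roth (f : Polynomial ℤ) (ξ : ℝ) (hf : Polynomial.aeval ξ f = 0) (e : ℕ)
    (hd : f.natDegree = e + 1) (δ : ℝ) (hδ : 0 < δ) (hδ1 : δ ≤ 1) :
    ∃ Q₀ : ℕ, ∀ x : ℚ, Q₀ ≤ x.den →
      Real.exp (-(2 + δ) * Real.log x.den) ≤ |(x : ℝ) - ξ| := by
  classical
  by_contra hcon
  push Not at hcon
  have hex : ∀ Λ : ℝ, ∃ x : ℚ, Λ ≤ Real.log x.den ∧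
      |(x : ℝ) - ξ| ≤ Real.exp (-(2 + δ) * Real.log x.den) := by
    intro Λ
    obtain ⟨x, hx, hx2⟩ := hcon ⌈Real.exp Λ⌉₊
    refine ⟨x, ?_, hx2.le⟩
    have h1 : Real.exp Λ ≤ x.den := (Nat.le_ceil _).trans (by exact_mod_cast hx)
    rwa [Real.le_log_iff_exp_le (by exact_mod_cast x.den_pos)]
  choose F hF1 hF2 using hex
  set ε := δ / 20 with hε
  have hε0 : 0 < ε := by positivity
  obtain ⟨B, hB, hpoly⟩ := index_poly f ξ hf e hd
  obtain ⟨m, hm1, hm2⟩ : ∃ m : ℕ, 1 ≤ m ∧ (e + 1) * Real.exp (-2 * ε ^ 2 * m) ≤ 1 / 2 := by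
    refine ⟨⌈Real.log (2 * (e + 1)) / (2 * ε ^ 2)⌉₊ + 1, by omega, ?_⟩
    set m := ⌈Real.log (2 * (e + 1)) / (2 * ε ^ 2)⌉₊ + 1 with hm
    have h1 : Real.log (2 * (e + 1)) / (2 * ε ^ 2) ≤ m := by
      refine (Nat.le_ceil _).trans ?_
      rw [hm]; push_cast; linarith
    rw [div_le_iff₀ (by positivity)] at h1
    have h2 : Real.exp (-2 * ε ^ 2 * m) ≤ Real.exp (-Real.log (2 * (e + 1))) := by
      apply Real.exp_le_exp.mpr; linarith
    rw [Real.exp_neg, Real.exp_log (by positivity)] at h2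
    have he : (0 : ℝ) < e + 1 := by positivity
    calc (e + 1) * Real.exp (-2 * ε ^ 2 * m) ≤ (e + 1) * (2 * (e + 1 : ℝ))⁻¹ := by gcongr
      _ = 1 / 2 := by field_simp
  obtain ⟨σ, _, rank, hcard, hrank, hRL⟩ := roth_lemma m
  obtain ⟨ω, hω, hroth⟩ := hRL ε hε0
  have hm1' : (1 : ℝ) ≤ m := by exact_mod_cast hm1
  set D := 8 * max 1 |ξ| with hD
  have hD1 : 1 ≤ D := by
    have : 1 ≤ max 1 |ξ| := le_max_left _ _
    linarith
  have hlB : 0 ≤ Real.log B := Real.log_nonneg hB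
  have hlD : 0 ≤ Real.log D := Real.log_nonneg hD1
  set Λ := 1 + 2 / ω + 2 * m * Real.log B / ω + 20 * (Real.log D + Real.log B) / δ with hΛ
  have hp1 : 0 ≤ 2 / ω := by positivity
  have hp2 : 0 ≤ 2 * m * Real.log B / ω := by positivity
  have hp3 : 0 ≤ 20 * (Real.log D + Real.log B) / δ := by positivity
  have hΛ1 : 1 ≤ Λ := by linarith
  -- the sequence of approximations
  set y : ℕ → ℚ := fun n => Nat.rec (F Λ)
    (fun _ q => F (Λ + (2 / ω + 1) * Real.log q.den)) n with hy
  set g : ℕ → ℝ := fun n => Real.log (y n).den with hg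
  have hg0 : ∀ n, 0 ≤ g n := fun n =>
    Real.log_nonneg (by exact_mod_cast (y n).den_pos)
  have hgs : ∀ n, Λ + (2 / ω + 1) * g n ≤ g (n + 1) := fun n => hF1 _
  have hgΛ : ∀ n, Λ ≤ g n := by
    intro n
    cases n with
    | zero => exact hF1 Λ
    | succ n =>
      have := hgs n
      have h2 : 0 ≤ (2 / ω + 1) * g n := mul_nonneg (by linarith) (hg0 n)
      linarith
  have happ : ∀ n, |(y n : ℝ) - ξ| ≤ Real.exp (-(2 + δ) * g n) := by
    intro n
    cases n with
    | zero => exact hF2 Λ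
    | succ n => exact hF2 _
  have hmono : Monotone g := by
    refine monotone_nat_of_le_succ fun n => ?_
    have := hgs n
    have h2 : 0 ≤ 2 / ω * g n := mul_nonneg hp1 (hg0 n)
    linarith
  have hgap : ∀ i j, i < j → 2 / ω * g i ≤ g j := by
    intro i j hij
    have h1 := hmono (Nat.succ_le_of_lt hij)
    have h2 := hgs i
    have h3 := hg0 i
    simp only [Nat.succ_eq_add_one] at h1
    linarith
  have hgpos : ∀ n, 0 < g n := fun n => by linarith [hgΛ n]
  -- the degrees
  set L : ℝ := 1 + ∑ n ∈ Finset.range m, g n / ε with hL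
  have hLg : ∀ i, g (rank i) / ε ≤ L := by
    intro i
    have := Finset.single_le_sum (f := fun n => g n / ε) (s := Finset.range m)
      (fun n _ => div_nonneg (hg0 n) hε0.le) (Finset.mem_range.mpr (hrank i))
    linarith
  have hL0 : 0 < L := by
    have : 0 ≤ ∑ n ∈ Finset.range m, g n / ε :=
      Finset.sum_nonneg fun n _ => div_nonneg (hg0 n) hε0.le
    linarith
  set r : σ → ℕ := fun i => ⌈L / g (rank i)⌉₊ with hr
  set x : σ → ℚ := fun i => y (rank i) with hx
  have hlog : ∀ i, Real.log (x i).den = g (rank i) := fun i => rfl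
  have hr1 : ∀ i, L / g (rank i) ≤ r i := fun i => Nat.le_ceil _
  have hr2 : ∀ i, (r i : ℝ) < L / g (rank i) + 1 := fun i =>
    Nat.ceil_lt_add_one (div_nonneg hL0.le (hg0 _))
  have hrpos : ∀ i, 0 < r i := fun i => Nat.ceil_pos.mpr (div_pos hL0 (hgpos _))
  have hLr : ∀ i, L ≤ r i * g (rank i) := fun i => by
    have := hr1 i
    rwa [div_le_iff₀ (hgpos _)] at this
  have hgL : ∀ i, g (rank i) ≤ ε * L := fun i => by
    have := hLg i
    rw [div_le_iff₀ hε0] at this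
    linarith
  have hrg : ∀ i, r i * g (rank i) ≤ (1 + ε) * L := fun i => by
    have h1 := mul_le_mul_of_nonneg_right (hr2 i).le (hg0 (rank i))
    rw [add_mul, div_mul_cancel₀ _ (hgpos _).ne'] at h1
    linarith [hgL i]
  have hε1 : ε ≤ 1 / 20 := by rw [hε]; linarith
  have hr3 : ∀ i, (r i : ℝ) * g (rank i) ≤ 2 * L := fun i => by
    nlinarith [hrg i]
  have hrΛ : ∀ i, (r i : ℝ) * Λ ≤ 2 * L := fun i =>
    (mul_le_mul_of_nonneg_left (hgΛ (rank i)) (Nat.cast_nonneg _)).trans (hr3 i)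
  have hrω : ∀ i, (r i : ℝ) ≤ ω * L := fun i => by
    have h1 : (r i : ℝ) * (2 / ω) ≤ 2 * L :=
      (mul_le_mul_of_nonneg_left (by linarith) (Nat.cast_nonneg _)).trans (hrΛ i)
    rw [mul_div_assoc', div_le_iff₀ hω] at h1
    linarith
  have hrr : ∀ i j, rank i < rank j → (r j : ℝ) ≤ ω * r i := fun i j hij => by
    have h1 := hgap _ _ hij
    have h2 : (r j : ℝ) * (2 / ω * g (rank i)) ≤ 2 * (r i * g (rank i)) :=
      (mul_le_mul_of_nonneg_left h1 (Nat.cast_nonneg _)).trans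
        ((hr3 j).trans (by linarith [hLr i]))
    have h3 : ((r j : ℝ) * (2 / ω)) * g (rank i) ≤ (2 * r i) * g (rank i) := by linarith
    have h4 := le_of_mul_le_mul_right h3 (hgpos _)
    rw [mul_div_assoc', div_le_iff₀ hω] at h4
    linarith
  set R := ∑ i, r i with hR
  have hRΛ : (R : ℝ) * Λ ≤ 2 * m * L := by
    rw [hR]; push_cast
    rw [Finset.sum_mul]
    refine (Finset.sum_le_card_nsmul _ _ _ fun i _ => hrΛ i).trans ?_
    rw [Finset.card_univ, hcard, nsmul_eq_mul]
    linarith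
  have hR0 : (0 : ℝ) ≤ R := Nat.cast_nonneg _
  -- the auxiliary polynomial
  obtain ⟨P, hP0, hPdeg, hPl, hPW⟩ := hpoly σ r ε (by omega) hrpos hε0 (by linarith)
    (by rw [hcard]; exact hm2)
  have hBR : B ^ R = Real.exp (R * Real.log B) := by
    rw [← Real.rpow_natCast, Real.rpow_def_of_pos (by linarith)]; ring_nf
  have hDR : D ^ R = Real.exp (R * Real.log D) := by
    rw [← Real.rpow_natCast, Real.rpow_def_of_pos (by linarith)]; ring_nf
  have hPexp : l1 P ≤ Real.exp (ω * L) := by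
    refine hPl.trans ?_
    rw [hBR]
    apply Real.exp_le_exp.mpr
    have h1 : (R : ℝ) * (2 * m * Real.log B / ω) ≤ 2 * m * L :=
      (mul_le_mul_of_nonneg_left (by linarith) hR0).trans hRΛ
    rw [mul_div_assoc', div_le_iff₀ hω] at h1
    have h2 : (2 * m : ℝ) * (R * Real.log B) ≤ (2 * m) * (ω * L) := by linarith
    exact le_of_mul_le_mul_left h2 (by linarith)
  obtain ⟨s, hs, hsle⟩ := hroth r x L P hP0 hrpos hLr hrω hrr hPdeg hPexp
  -- comparison
  rw [coeff_shift, hasse_map] at hs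
  have hlow := lower_bound (hasse s P) r (hPdeg.hasse s) x hs
  rw [cast_eval, ← hasse_map, ← coeff_shift] at hlow
  have hup := upper_bound P r hrpos hPdeg ξ _ hPW (fun h => (x h : ℝ)) (fun h => g (rank h))
    (2 + δ) L (by linarith) (fun h => happ _) hLr s hL0.le
  have hden : ∏ h, ((x h).den : ℝ) ^ r h ≤ Real.exp (m * ((1 + ε) * L)) := by
    calc ∏ h, ((x h).den : ℝ) ^ r h = ∏ h, Real.exp (r h * g (rank h)) := by
          refine Finset.prod_congr rfl fun h _ => ?_
          rw [Real.exp_nat_mul, ← hlog, Real.exp_log (by exact_mod_cast (x h).den_pos)]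
      _ = Real.exp (∑ h, r h * g (rank h)) := (Real.exp_sum _ _).symm
      _ ≤ _ := by
        apply Real.exp_le_exp.mpr
        refine (Finset.sum_le_card_nsmul _ _ _ fun i _ => hrg i).trans ?_
        rw [Finset.card_univ, hcard, nsmul_eq_mul]
  rw [hcard] at hup
  set S := ∑ h, (s h : ℝ) * (1 / r h : ℝ) with hS
  have hfin : (1 : ℝ) ≤ Real.exp (R * Real.log D + R * Real.log B +
      -(2 + δ) * L * ((1 / 2 - ε) * m - S) + m * ((1 + ε) * L)) := by
    rw [Real.exp_add, Real.exp_add, Real.exp_add, ← hBR, ← hDR]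
    refine hlow.trans ?_
    have hl := l1_nonneg P
    apply mul_le_mul _ hden (Finset.prod_nonneg fun h _ => by positivity) (by positivity)
    refine hup.trans ?_
    gcongr
  rw [Real.one_le_exp_iff] at hfin
  have h1 : (R : ℝ) * (20 * (Real.log D + Real.log B) / δ) ≤ 2 * m * L :=
    (mul_le_mul_of_nonneg_left (by linarith) hR0).trans hRΛ
  rw [mul_div_assoc', div_le_iff₀ hδ] at h1
  have hmL : 0 < m * L := by positivity
  have h2 : (1 / 2 - 2 * ε) * m ≤ (1 / 2 - ε) * m - S := by
    have : ε * 1 ≤ ε * m := mul_le_mul_of_nonneg_left hm1' hε0.le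
    linarith
  have h3 : (2 + δ) * L * ((1 / 2 - 2 * ε) * m) ≤ (2 + δ) * L * ((1 / 2 - ε) * m - S) :=
    mul_le_mul_of_nonneg_left h2 (by positivity)
  have h4 : (1 + δ / 2 - 6 * ε) * (m * L) ≤ (2 + δ) * (1 / 2 - 2 * ε) * (m * L) := by
    apply mul_le_mul_of_nonneg_right _ hmL.le
    have : δ * ε ≤ 1 * ε := mul_le_mul_of_nonneg_right hδ1 hε0.le
    linarith
  have h5 : 0 < δ * (m * L) := by positivity
  have h6 : ε * (m * L) = δ * (m * L) / 20 := by rw [hε]; ring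
  have h7 : (1 + δ / 2 - 6 * ε) * (m * L) = m * L + δ * (m * L) / 2 - 6 * (ε * (m * L)) := by ring
  have h8 : (m : ℝ) * ((1 + ε) * L) = m * L + ε * (m * L) := by ring
  linarith

end Main
end RothThm

namespace RothThm

section Final

lemma small_den (ξ : ℝ) (hirr : Irrational ξ) (Q : ℕ) :
    ∃ c : ℝ, 0 < c ∧ ∀ q : ℕ, 0 < q → q < Q → ∀ p : ℤ, c ≤ |q * ξ - p| := by
  induction Q with
  | zero => exact ⟨1, one_pos, fun q _ h => by omega⟩
  | succ Q ih =>
    obtain ⟨c, hc, h⟩ := ih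
    by_cases hQ : Q = 0
    · exact ⟨1, one_pos, fun q _ h => by omega⟩
    · have hirr2 : Irrational (Q * ξ) := hirr.natCast_mul hQ
      have hpos : 0 < |Q * ξ - round (Q * ξ)| :=
        abs_pos.mpr (sub_ne_zero.mpr (hirr2.ne_int _))
      refine ⟨min c |Q * ξ - round (Q * ξ)|, lt_min hc hpos, ?_⟩
      intro q hq hqQ p
      rcases Nat.lt_succ_iff_lt_or_eq.mp hqQ with h1 | h1
      · exact (min_le_left _ _).trans (h q hq h1 p)
      · subst h1
        exact (min_le_right _ _).trans (round_le _ _)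

theorem dist_int (ξ : ℝ) (hirr : Irrational ξ) (halg : IsAlgebraic ℚ ξ) (δ : ℝ) (hδ : 0 < δ)
    (hδ1 : δ ≤ 1) :
    ∃ c : ℝ, 0 < c ∧ ∀ k : ℕ, 0 < k → ∀ p : ℤ, c * (k : ℝ) ^ (-(1 + δ)) ≤ |k * ξ - p| := by
  have hZ : IsAlgebraic ℤ ξ := (IsFractionRing.isAlgebraic_iff ℤ ℚ ℝ).mpr halg
  obtain ⟨f, hf0, hf⟩ := hZ
  obtain ⟨e, he⟩ : ∃ e, f.natDegree = e + 1 := by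
    apply Nat.exists_eq_succ_of_ne_zero
    intro h0
    rw [Polynomial.eq_C_of_natDegree_eq_zero h0] at hf
    simp only [Polynomial.aeval_C, eq_intCast, Int.cast_eq_zero] at hf
    apply hf0
    rw [Polynomial.eq_C_of_natDegree_eq_zero h0]
    simp at hf
    rw [hf, map_zero]
  obtain ⟨Q, hQ⟩ := roth f ξ hf e he δ hδ hδ1
  obtain ⟨c, hc, hsm⟩ := small_den ξ hirr Q
  refine ⟨min 1 c, lt_min one_pos hc, ?_⟩
  intro k hk p
  have hk' : (0 : ℝ) < k := by exact_mod_cast hk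
  have hk1 : (1 : ℝ) ≤ k := by exact_mod_cast hk
  set x : ℚ := (p : ℚ) / (k : ℚ) with hx
  have hdvd : (x.den : ℤ) ∣ (k : ℤ) := by
    have := Rat.den_dvd p k
    rw [Rat.divInt_eq_div] at this
    simpa [hx] using this
  have hdk : x.den ≤ k := Nat.le_of_dvd hk (by exact_mod_cast hdvd)
  have hd0 : (0 : ℝ) < x.den := by exact_mod_cast x.den_pos
  have hdk' : (x.den : ℝ) ≤ k := by exact_mod_cast hdk
  have hxR : (x : ℝ) = p / k := by rw [hx]; push_cast; rfl
  have hkx : |k * ξ - p| = k * |(x : ℝ) - ξ| := by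
    rw [← abs_of_pos hk', ← abs_mul, hxR, abs_of_pos hk', abs_sub_comm]
    congr 1
    field_simp
  have hkpow : (0 : ℝ) ≤ (k : ℝ) ^ (-(1 + δ)) := by positivity
  by_cases hlt : x.den < Q
  · have h1 := hsm x.den x.den_pos hlt x.num
    have h2 : |x.den * ξ - x.num| = x.den * |(x : ℝ) - ξ| := by
      have hn : (x : ℝ) * x.den = x.num := by exact_mod_cast Rat.mul_den_eq_num x
      rw [← hn, ← abs_of_pos hd0, ← abs_mul, abs_of_pos hd0, abs_sub_comm]
      congr 1; ring
    have h3 : (k : ℝ) ^ (-(1 + δ)) ≤ 1 := Real.rpow_le_one_of_one_le_of_nonpos hk1 (by linarith)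
    rw [hkx]
    calc min 1 c * (k : ℝ) ^ (-(1 + δ)) ≤ c * 1 :=
          mul_le_mul (min_le_right _ _) h3 hkpow hc.le
      _ ≤ x.den * |(x : ℝ) - ξ| := by rw [mul_one, ← h2]; exact h1
      _ ≤ _ := by gcongr
  · push Not at hlt
    have h1 := hQ x hlt
    rw [hkx]
    have h2 : (k : ℝ) ^ (-(2 + δ)) ≤ |(x : ℝ) - ξ| := by
      refine le_trans ?_ h1
      rw [Real.rpow_def_of_pos hk']
      apply Real.exp_le_exp.mpr
      have := Real.log_le_log hd0 hdk'
      nlinarith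
    calc min 1 c * (k : ℝ) ^ (-(1 + δ)) ≤ 1 * (k : ℝ) ^ (-(1 + δ)) := by
          gcongr; exact min_le_left _ _
      _ = k * (k : ℝ) ^ (-(2 + δ)) := by
          rw [one_mul, show -(1 + δ) = 1 + -(2 + δ) by ring, Real.rpow_add hk', Real.rpow_one]
      _ ≤ _ := by gcongr

lemma two_abs_le_sin (y : ℝ) : 2 * |y - round y| ≤ |Real.sin (Real.pi * y)| := by
  set z := y - round y with hz
  have h1 : |z| ≤ 1 / 2 := abs_sub_round y
  have e : |Real.sin (Real.pi * y)| = |Real.sin (Real.pi * |z|)| := by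
    have h2 : Real.pi * z = Real.pi * y - round y * Real.pi := by rw [hz]; ring
    have h3 : |Real.sin (Real.pi * z)| = |Real.sin (Real.pi * y)| := by
      rw [h2, Real.sin_sub_int_mul_pi, abs_mul]
      simp
    rw [← h3]
    rcases abs_choice z with h | h <;> rw [h]
    rw [mul_neg, Real.sin_neg, abs_neg]
  rw [e]
  have h4 := Real.mul_le_sin (x := Real.pi * |z|) (by positivity) (by nlinarith [Real.pi_pos])
  refine le_trans ?_ (h4.trans (le_abs_self _))
  have := Real.pi_pos
  apply le_of_eq
  field_simp

theorem final (ξ : ℝ) (hirr : Irrational ξ) (halg : IsAlgebraic ℚ ξ)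
    (α : ℝ) (hα : α ∈ Set.Ioo (0 : ℝ) (1 / 2)) :
    ∃ T C : ℝ, 0 < T ∧ 0 < C ∧ ∀ t : ℝ, T < t → 2 * C * t ^ α ≤
      ⨅ k : ℕ+, Real.sqrt ((k : ℝ) ^ 2 +
        4 * t ^ 2 * Real.sin ((k : ℝ) * (2 * Real.pi * ξ) / 2) ^ 2) := by
  obtain ⟨hα0, hα1⟩ := hα
  set δ := min 1 (1 / α - 2) with hδd
  have hδ : 0 < δ := by
    apply lt_min one_pos
    rw [sub_pos, lt_div_iff₀ hα0]; linarith
  have hαδ : α * (1 + δ) ≤ 1 - α := by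
    have h1 : δ ≤ 1 / α - 2 := min_le_right _ _
    have h2 := mul_le_mul_of_nonneg_left h1 hα0.le
    have h3 : α * (1 / α - 2) = 1 - 2 * α := by field_simp
    linarith
  obtain ⟨c, hc, hdist⟩ := dist_int ξ hirr halg δ hδ (min_le_left _ _)
  refine ⟨1, min (1 / 2) (2 * c), one_pos, lt_min (by norm_num) (by positivity), ?_⟩
  intro t ht
  have ht0 : 0 < t := by linarith
  have htα : 0 < t ^ α := by positivity
  apply le_ciInf
  intro k
  have hk : (0 : ℝ) < (k : ℝ) := by exact_mod_cast k.pos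
  apply Real.le_sqrt_of_sq_le
  have hC1 : min (1 / 2) (2 * c) ≤ 1 / 2 := min_le_left _ _
  have hC2 : min (1 / 2) (2 * c) ≤ 2 * c := min_le_right _ _
  have hC0 : 0 < min (1 / 2) (2 * c) := lt_min (by norm_num) (by positivity)
  set C := min (1 / 2) (2 * c) with hC
  by_cases hkt : t ^ α ≤ (k : ℝ)
  · have h1 : 2 * C * t ^ α ≤ k := by nlinarith
    have h2 : (2 * C * t ^ α) ^ 2 ≤ (k : ℝ) ^ 2 := pow_le_pow_left₀ (by positivity) h1 2
    have h3 : 0 ≤ 4 * t ^ 2 * Real.sin ((k : ℝ) * (2 * Real.pi * ξ) / 2) ^ 2 := by positivity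
    linarith
  · push Not at hkt
    have h1 := two_abs_le_sin (k * ξ)
    have h2 := hdist k k.pos (round ((k : ℝ) * ξ))
    have e1 : (k : ℝ) * (2 * Real.pi * ξ) / 2 = Real.pi * (k * ξ) := by ring
    rw [e1]
    have h3 : t ^ (-(1 - α)) ≤ (k : ℝ) ^ (-(1 + δ)) := by
      calc t ^ (-(1 - α)) ≤ t ^ (α * (-(1 + δ))) :=
            Real.rpow_le_rpow_of_exponent_le ht.le (by linarith)
        _ = (t ^ α) ^ (-(1 + δ)) := Real.rpow_mul ht0.le _ _
        _ ≤ _ := Real.rpow_le_rpow_of_nonpos hk hkt.le (by linarith)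
    have h4 : t ^ α = t * t ^ (-(1 - α)) := by
      nth_rewrite 2 [← Real.rpow_one t]
      rw [← Real.rpow_add ht0]; congr 1; ring
    have h5 : 2 * c * t ^ α ≤ t * |Real.sin (Real.pi * (k * ξ))| := by
      calc 2 * c * t ^ α = t * (2 * (c * t ^ (-(1 - α)))) := by rw [h4]; ring
        _ ≤ t * (2 * (c * (k : ℝ) ^ (-(1 + δ)))) := by gcongr
        _ ≤ t * (2 * |(k : ℝ) * ξ - round ((k : ℝ) * ξ)|) := by gcongr
        _ ≤ _ := by gcongr
    have h6 : 2 * C * t ^ α ≤ 2 * (t * |Real.sin (Real.pi * (k * ξ))|) := by nlinarith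
    have h7 := pow_le_pow_left₀ (by positivity) h6 2
    have h8 : (2 * (t * |Real.sin (Real.pi * (k * ξ))|)) ^ 2 =
        4 * t ^ 2 * Real.sin (Real.pi * (k * ξ)) ^ 2 := by
      rw [mul_pow, mul_pow, sq_abs]; ring
    rw [h8] at h7
    nlinarith [sq_nonneg (k : ℝ)]

end Final
end RothThm

theorem stmt_5 (ξ : ℝ) (hirr : Irrational ξ) (halg : IsAlgebraic ℚ ξ)
    (α : ℝ) (hα : α ∈ Set.Ioo (0 : ℝ) (1 / 2)) :
    ∃ T C : ℝ, 0 < T ∧ 0 < C ∧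
      ∀ t : ℝ, T < t → 2 * C * t ^ α ≤ L (2 * Real.pi * ξ) t := by
  exact RothThm.final ξ hirr halg α hα
end

section
/- For every real number θ and every real t ≥ 1, the infimum over integers k ≥ 1 of √(k² + 4 t² sin²(kθ/2)) is at most √(1 + 4π²)·√t. (Equivalently: whatever θ is, the injectivity radius of the corresponding flat plane bundle satisfies inj(t) ≤ (√(1+4π²)/2)·√t for all t ≥ 1.) -/
theorem stmt_8 (θ t : ℝ) (ht : 1 ≤ t) :
    L θ t ≤ Real.sqrt (1 + 4 * Real.pi ^ 2) * Real.sqrt t := by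
  have hs1 : 1 ≤ Real.sqrt t := Real.one_le_sqrt.mpr ht
  have hs2 : Real.sqrt t ^ 2 = t := Real.sq_sqrt (by linarith)
  have hn : 0 < ⌊Real.sqrt t⌋₊ := Nat.floor_pos.mpr hs1
  obtain ⟨k, hk, hkn, hb⟩ := Real.exists_nat_abs_mul_sub_round_le (θ / (2 * Real.pi)) hn
  set j : ℤ := round ((k : ℝ) * (θ / (2 * Real.pi))) with hj
  set x : ℝ := (k : ℝ) * (θ / (2 * Real.pi)) - j with hx
  have hpi := Real.pi_pos
  have hkt : (k : ℝ) ≤ Real.sqrt t :=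
    le_trans (by exact_mod_cast hkn) (Nat.floor_le (by linarith))
  have hfl : Real.sqrt t < (⌊Real.sqrt t⌋₊ : ℝ) + 1 := Nat.lt_floor_add_one _
  have hx2 : |x| * Real.sqrt t ≤ 1 := by
    have h1 : |x| * ((⌊Real.sqrt t⌋₊ : ℝ) + 1) ≤ 1 := by
      rwa [le_div_iff₀ (by linarith)] at hb
    nlinarith [abs_nonneg x]
  have hx3 : x ^ 2 * t ≤ 1 := by
    have h0 : 0 ≤ |x| * Real.sqrt t := by positivity
    have h1 : (|x| * Real.sqrt t) ^ 2 ≤ 1 := by nlinarith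
    rwa [mul_pow, sq_abs, hs2] at h1
  have hang : (k : ℝ) * θ / 2 = Real.pi * x + j * Real.pi := by
    rw [hx]; field_simp; ring
  have hsin : Real.sin ((k : ℝ) * θ / 2) ^ 2 ≤ Real.pi ^ 2 * x ^ 2 := by
    have h1 : |Real.sin ((k : ℝ) * θ / 2)| ≤ |Real.pi * x| := by
      rw [hang, Real.sin_add_int_mul_pi, abs_mul, abs_zpow, abs_neg, abs_one, one_zpow, one_mul]
      exact Real.abs_sin_le_abs
    have h2 := sq_le_sq.mpr h1
    rwa [mul_pow] at h2
  have hbdd : BddBelow (Set.range fun k : ℕ+ =>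
      Real.sqrt ((k : ℝ) ^ 2 + 4 * t ^ 2 * Real.sin ((k : ℝ) * θ / 2) ^ 2)) :=
    ⟨0, by rintro _ ⟨i, rfl⟩; exact Real.sqrt_nonneg _⟩
  refine (ciInf_le hbdd ⟨k, hk⟩).trans ?_
  rw [← Real.sqrt_mul (by positivity)]
  apply Real.sqrt_le_sqrt
  change (k : ℝ) ^ 2 + 4 * t ^ 2 * Real.sin ((k : ℝ) * θ / 2) ^ 2 ≤ _
  have hk2 : (k : ℝ) ^ 2 ≤ t := by
    rw [← hs2]; gcongr
  have h3 : t ^ 2 * Real.sin ((k : ℝ) * θ / 2) ^ 2 ≤ Real.pi ^ 2 * t := by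
    calc _ ≤ t ^ 2 * (Real.pi ^ 2 * x ^ 2) := by gcongr
      _ = Real.pi ^ 2 * t * (x ^ 2 * t) := by ring
      _ ≤ Real.pi ^ 2 * t * 1 := by gcongr
      _ = _ := by ring
  nlinarith
end

section
/- Let ξ = Σ_{n=1}^∞ 10^{-n!} (a Liouville number) and θ = 2πξ. Then for every real a > 0, the limit inferior as t → ∞ of t^{-a} · (inf over integers k ≥ 1 of √(k² + 4 t² sin²(kθ/2))) is equal to 0. -/
theorem L_nonneg_aux (θ t : ℝ) : 0 ≤ L θ t :=
  Real.iInf_nonneg fun _ => Real.sqrt_nonneg _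

theorem xi_eq_aux : ∑' n : ℕ, ((10 : ℝ) ^ Nat.factorial (n + 1))⁻¹
    = liouvilleNumber 10 - 1 / 10 := by
  have h := (LiouvilleNumber.summable (m := 10) (by norm_num)).sum_add_tsum_nat_add 1
  unfold liouvilleNumber
  rw [← h]
  simp

/-- The bound along the sequence `t = q ^ m`, `q = 10 ^ (m+2)!`. -/
theorem L_le_aux (m : ℕ) :
    L (2 * Real.pi * ∑' n : ℕ, ((10 : ℝ) ^ Nat.factorial (n + 1))⁻¹)
      (((10 : ℝ) ^ Nat.factorial (m + 2)) ^ m) ≤ 2 * (10 : ℝ) ^ Nat.factorial (m + 2) := by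
  rw [xi_eq_aux]
  obtain ⟨p, hp⟩ := LiouvilleNumber.partialSum_eq_rat (m := 10) (by norm_num) (m + 2)
  have hsum := LiouvilleNumber.partialSum_add_remainder (m := 10) (by norm_num) (m + 2)
  have hr := LiouvilleNumber.remainder_lt (m + 2) (m := 10) (by norm_num)
  have hr0 := LiouvilleNumber.remainder_pos (m := 10) (by norm_num) (m + 2)
  obtain ⟨s, hs⟩ : ∃ s, Nat.factorial (m + 2) = s + 1 :=
    ⟨_, (Nat.succ_pred_eq_of_pos (Nat.factorial_pos _)).symm⟩
  push_cast at hp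
  have hqs : (10 : ℝ) ^ Nat.factorial (m + 2) = 10 * ((10 ^ s : ℕ) : ℝ) := by
    rw [hs]; push_cast; ring
  have hq10 : (10 : ℝ) ≤ 10 ^ Nat.factorial (m + 2) := by
    rw [hs, pow_succ]
    have : (1 : ℝ) ≤ 10 ^ s := one_le_pow₀ (by norm_num)
    linarith
  obtain ⟨k, hkdef⟩ : ∃ k : ℕ+, ((k : ℕ) : ℝ) = (10 : ℝ) ^ Nat.factorial (m + 2) :=
    ⟨Nat.toPNat' (10 ^ Nat.factorial (m + 2)), by simp [Nat.toPNat'_coe]⟩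
  refine (ciInf_le ⟨0, by rintro _ ⟨k, rfl⟩; exact Real.sqrt_nonneg _⟩ k).trans ?_
  rw [hkdef]
  rw [← hsum, hp]
  generalize LiouvilleNumber.remainder 10 (m + 2) = r at *
  generalize (10 : ℝ) ^ Nat.factorial (m + 2) = q at *
  have hq : 0 < q := by linarith
  have harg : q * (2 * Real.pi * (p / q + r - 1 / 10)) / 2
      = Real.pi * (q * r) + p * Real.pi - ((10 ^ s : ℕ) : ℝ) * Real.pi := by
    have : ((10 ^ s : ℕ) : ℝ) = q / 10 := by linarith
    rw [this]; field_simp; ring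
  have hsin : Real.sin (q * (2 * Real.pi * (p / q + r - 1 / 10)) / 2) ^ 2
      = Real.sin (Real.pi * (q * r)) ^ 2 := by
    rw [harg, Real.sin_sub_nat_mul_pi, Real.sin_add_nat_mul_pi, mul_pow, mul_pow,
      ← pow_mul, ← pow_mul, mul_comm, mul_comm _ 2, pow_mul, mul_comm _ 2, pow_mul]
    norm_num
  rw [hsin]
  have h1 : Real.sin (Real.pi * (q * r)) ^ 2 ≤ (Real.pi * (q * r)) ^ 2 :=
    sq_le_sq.mpr Real.abs_sin_le_abs
  have h2 : q ^ m * (q * (q * r)) ≤ 1 := by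
    have := (lt_div_iff₀ (by positivity)).1 hr
    calc q ^ m * (q * (q * r)) = r * q ^ (m + 2) := by ring
      _ ≤ 1 := this.le
  have h3 : 2 * (q ^ m * (Real.pi * (q * r))) ≤ 1 := by
    have hX : 0 ≤ q ^ m * (q * r) := by positivity
    have : 10 * (q ^ m * (q * r)) ≤ 1 := by nlinarith
    nlinarith [Real.pi_lt_four]
  have h3' : 0 ≤ 2 * (q ^ m * (Real.pi * (q * r))) := by positivity
  apply Real.sqrt_le_iff.2 ⟨by linarith, ?_⟩
  have h4 : 4 * (q ^ m) ^ 2 * Real.sin (Real.pi * (q * r)) ^ 2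
      ≤ (2 * (q ^ m * (Real.pi * (q * r)))) ^ 2 := by
    calc _ ≤ 4 * (q ^ m) ^ 2 * (Real.pi * (q * r)) ^ 2 := by gcongr
      _ = _ := by ring
  have h5 : (2 * (q ^ m * (Real.pi * (q * r)))) ^ 2 ≤ 1 := pow_le_one₀ h3' h3
  nlinarith

theorem frequently_aux (a : ℝ) (ha : 0 < a) (ε : ℝ) (hε : 0 < ε) :
    ∃ᶠ t : ℝ in Filter.atTop,
      t ^ (-a) * L (2 * Real.pi * ∑' n : ℕ, ((10 : ℝ) ^ Nat.factorial (n + 1))⁻¹) t < ε := by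
  rw [Filter.frequently_atTop]
  intro T
  obtain ⟨m, hm⟩ := exists_nat_ge (max (max T (2 / a)) (2 / ε))
  have hmT : T ≤ m := ((le_max_left _ _).trans (le_max_left _ _)).trans hm
  have hma : 2 / a ≤ m := ((le_max_right _ _).trans (le_max_left _ _)).trans hm
  have hme : 2 / ε ≤ m := (le_max_right _ _).trans hm
  have hL := L_le_aux m
  have hmq : (m : ℝ) < (10 : ℝ) ^ Nat.factorial (m + 2) := by
    have h1 : m + 2 ≤ Nat.factorial (m + 2) := Nat.self_le_factorial _
    have h2 := Nat.lt_pow_self (n := Nat.factorial (m + 2)) (a := 10) (by norm_num)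
    have h3 : m < 10 ^ Nat.factorial (m + 2) := by omega
    exact_mod_cast h3
  have hq1 : (1 : ℝ) ≤ (10 : ℝ) ^ Nat.factorial (m + 2) := one_le_pow₀ (by norm_num)
  refine ⟨((10 : ℝ) ^ Nat.factorial (m + 2)) ^ m, ?_, ?_⟩
  · have hm0 : m ≠ 0 := by
      rintro rfl
      have : 0 < 2 / a := by positivity
      simp at hma; linarith
    have := le_self_pow₀ hq1 hm0
    linarith
  · generalize L _ _ = l at *
    generalize (10 : ℝ) ^ Nat.factorial (m + 2) = q at *
    have hq : 0 < q := by linarith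
    have h2a : 2 ≤ a * m := by rw [div_le_iff₀ ha] at hma; linarith
    have hpow : (q ^ m) ^ (-a) ≤ (q ^ 2)⁻¹ := by
      rw [← Real.rpow_natCast, ← Real.rpow_mul hq.le, ← Real.rpow_natCast, ← Real.rpow_neg hq.le]
      apply Real.rpow_le_rpow_of_exponent_le hq1
      push_cast
      linarith
    calc (q ^ m) ^ (-a) * l ≤ (q ^ m) ^ (-a) * (2 * q) := by gcongr
      _ ≤ (q ^ 2)⁻¹ * (2 * q) := by gcongr
      _ = 2 / q := by field_simp
      _ < ε := by
        rw [div_lt_iff₀ hq]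
        rw [div_le_iff₀ hε] at hme
        nlinarith

theorem stmt_9 (a : ℝ) (ha : 0 < a) :
    Filter.liminf
      (fun t : ℝ =>
        t ^ (-a) * L (2 * Real.pi * ∑' n : ℕ, ((10 : ℝ) ^ Nat.factorial (n + 1))⁻¹) t)
      Filter.atTop = 0 := by
  rw [Filter.liminf_eq]
  apply IsGreatest.csSup_eq
  constructor
  · filter_upwards [Filter.eventually_ge_atTop 0] with t ht
    exact mul_nonneg (Real.rpow_nonneg ht _) (L_nonneg_aux _ _)
  · intro c hc
    by_contra! hpos
    obtain ⟨t, h1, h2⟩ := ((frequently_aux a ha c hpos).and_eventually hc).exists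
    exact absurd h2 (not_le.2 h1)
end
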